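/- Any unbounded polynomial class C, i.e., any permutation class with finitely many sum-indecomposable permutations whose dominant growth rate γ equals 1 and whose growth function is unbounded, exhibits a Wilf collapse. -/

import Mathlib

open Filter Asymptotics

/-- A (finite) permutation: a size `n` together with a bijection of `Fin n`,
thought of in one-line notation as the sequence `π 0, π 1, …, π (n-1)`. -/
abbrev PPerm : Type := Σ n : ℕ, Equiv.Perm (Fin n)

/-- Pattern containment: `π ≤ τ` iff `τ` has a subsequence (a strictly increasing choice
of positions) whose entries are in the same relative order as `π`. -/
def PatternLE (π τ : PPerm) : Prop :=
  ∃ g : Fin π.1 → Fin τ.1, StrictMono g ∧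
    ∀ i j : Fin π.1, π.2 i < π.2 j ↔ τ.2 (g i) < τ.2 (g j)

/-- A permutation class: a set of permutations closed downward under containment. -/
def IsPermClass (C : Set PPerm) : Prop :=
  ∀ π τ : PPerm, PatternLE π τ → τ ∈ C → π ∈ C

/-- `cnt C n` is the number `c_n` of permutations of size `n` in `C`. -/
noncomputable def cnt (C : Set PPerm) (n : ℕ) : ℕ :=
  Set.ncard {τ : PPerm | τ ∈ C ∧ τ.1 = n}

/-- The number of permutations of size `n` in `C` avoiding `α`. -/
noncomputable def avcnt (C : Set PPerm) (α : PPerm) (n : ℕ) : ℕ :=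
  Set.ncard {τ : PPerm | τ ∈ C ∧ τ.1 = n ∧ ¬ PatternLE α τ}

/-- `α` and `β` are Wilf-equivalent in `C`: for every `n`, `C` has as many size-`n`
permutations avoiding `α` as avoiding `β`. -/
def WilfEq (C : Set PPerm) (α β : PPerm) : Prop := ∀ n : ℕ, avcnt C α n = avcnt C β n

/-- `wilfcnt C n` is the number `w_n` of Wilf(-equivalence) classes formed by the
size-`n` permutations of `C`. -/
noncomputable def wilfcnt (C : Set PPerm) (n : ℕ) : ℕ :=
  Set.ncard {S : Set PPerm | ∃ α : PPerm, α ∈ C ∧ α.1 = n ∧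
    S = {β : PPerm | β ∈ C ∧ β.1 = n ∧ WilfEq C α β}}

/-- `C` has a *Wilf collapse* if `w_n = o(c_n)`. -/
def WilfCollapse (C : Set PPerm) : Prop :=
  (fun n => (wilfcnt C n : ℝ)) =o[atTop] fun n => (cnt C n : ℝ)

/-- `C` has an *exponential Wilf collapse* if `w_n = o(rⁿ·c_n)` for some `r < 1`. -/
def ExpWilfCollapse (C : Set PPerm) : Prop :=
  ∃ r : ℝ, r < 1 ∧
    (fun n => (wilfcnt C n : ℝ)) =o[atTop] fun n => r ^ n * (cnt C n : ℝ)

/-- The (direct) sum `α ⊕ β` of two permutations: `β` is placed above and to the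
right of `α`. -/
def psum (α β : PPerm) : PPerm :=
  ⟨α.1 + β.1, (finSumFinEquiv.symm.trans ((Equiv.sumCongr α.2 β.2).trans finSumFinEquiv))⟩

/-- A permutation is *sum-indecomposable* if it is nonempty and is not the sum of two
nonempty permutations. -/
def SumIndec (π : PPerm) : Prop :=
  0 < π.1 ∧ ¬ ∃ α β : PPerm, 0 < α.1 ∧ 0 < β.1 ∧ π = psum α β

/-- A set of permutations is *sum-closed* if it is closed under `⊕`. -/
def SumClosed (C : Set PPerm) : Prop :=
  ∀ α β : PPerm, α ∈ C → β ∈ C → psum α β ∈ C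

/-!
A permutation decomposes uniquely as `inc c₀ ⊕ x₁ ⊕ inc c₁ ⊕ ⋯ ⊕ xₖ ⊕ inc cₖ` with
sum-indecomposable blocks `xᵢ` of size at least `2`, so it is a skeleton `x₁ … xₖ` together with
the run lengths `cᵢ`. Polynomial growth bounds `k`, since otherwise all sums of copies of `1` and
`21` would lie in the class; hence there are finitely many skeletons. By Dickson's lemma,
membership in the class does not depend on the exact length of a run once that length is at least
some `N`. Let `d` be the maximal number of runs of length at least `N` in a member of the class.
Letting those runs vary gives `c_n ≥ const · n^(d-1)`, and counting words gives
`c_n = O(n^(d-1))`, so `d ≥ 2` when `c_n` is unbounded.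

If `α` has `d` very long runs, then each member `τ` of the class containing `α` also has exactly
`d` long runs, and every embedding of `α` in `τ` sends the `k`-th long run of `α` into the `k`-th
long run of `τ`, up to a bounded number of points. Therefore moving one point from the `k`-th long
run to the `k'`-th, simultaneously in `α` and in `τ`, is a size-preserving bijection between the
members containing the old `α` and those containing the new one. So the Wilf class of `α` is
unchanged when one of its long runs is emptied into another down to a bounded length. Every Wilf
class thus has a representative with at most `d - 1` very long runs, whence
`w_n = O(n^(d-2)) = o(c_n)`.
-/

namespace PPerm

local infixr:65 "⊕ₚ" => psum

/-- The entry of `π` in position `i`. Past the end of `π` it is `i` itself, so that the entries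
form a permutation of `ℕ`. -/
def entry (π : PPerm) : Equiv.Perm ℕ := π.2.extendDomain Fin.equivSubtype

lemma entry_val (π : PPerm) (i : Fin π.1) : π.entry i = π.2 i :=
  π.2.extendDomain_apply_image Fin.equivSubtype i

lemma entry_of_le {π : PPerm} {i : ℕ} (h : π.1 ≤ i) : π.entry i = i :=
  π.2.extendDomain_apply_not_subtype _ h.not_gt

lemma entry_lt {π : PPerm} {i : ℕ} (h : i < π.1) : π.entry i < π.1 :=
  (entry_val π ⟨i, h⟩).trans_lt (π.2 _).isLt

lemma ext_entry {π τ : PPerm} (hsize : π.1 = τ.1) (h : ∀ i < π.1, π.entry i = τ.entry i) :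
    π = τ := by
  obtain ⟨n, p⟩ := π
  obtain ⟨m, q⟩ := τ
  obtain rfl : n = m := hsize
  congr 1
  ext i
  rw [← entry_val ⟨n, p⟩ i, ← entry_val ⟨n, q⟩ i]
  exact h i i.isLt

lemma exists_entry_eq {n : ℕ} {f : ℕ → ℕ} (hf : Set.MapsTo f (Set.Iio n) (Set.Iio n))
    (hinj : Set.InjOn f (Set.Iio n)) : ∃ π : PPerm, π.1 = n ∧ ∀ i < n, π.entry i = f i := by
  let p : Fin n → Fin n := fun i ↦ ⟨f i, hf i.isLt⟩
  have hp : Function.Injective p := fun i j hij ↦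
    Fin.ext (hinj i.isLt j.isLt (congrArg Fin.val hij))
  exact ⟨⟨n, Equiv.ofBijective p (Finite.injective_iff_bijective.mp hp)⟩, rfl,
    fun i hi ↦ entry_val _ ⟨i, hi⟩⟩

@[simp] lemma psum_fst (α β : PPerm) : (α ⊕ₚ β).1 = α.1 + β.1 := rfl

lemma entry_psum_of_lt {α : PPerm} (β : PPerm) {i : ℕ} (h : i < α.1) :
    (α ⊕ₚ β).entry i = α.entry i :=
  calc
    (α ⊕ₚ β).entry i = ((α ⊕ₚ β).2 (Fin.castAdd β.1 ⟨i, h⟩)).val :=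
        entry_val (α ⊕ₚ β) (Fin.castAdd β.1 ⟨i, h⟩)
    _ = (finSumFinEquiv
          (Sum.map α.2 β.2 (finSumFinEquiv.symm (Fin.castAdd β.1 ⟨i, h⟩)))).val := rfl
    _ = α.2 ⟨i, h⟩ := by rw [finSumFinEquiv_symm_apply_castAdd]; rfl
    _ = α.entry i := (entry_val α ⟨i, h⟩).symm

lemma entry_psum_add (α β : PPerm) (i : ℕ) : (α ⊕ₚ β).entry (α.1 + i) = α.1 + β.entry i := by
  obtain h | h := lt_or_ge i β.1
  · calc
      (α ⊕ₚ β).entry (α.1 + i) = ((α ⊕ₚ β).2 (Fin.natAdd α.1 ⟨i, h⟩)).val :=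
        entry_val (α ⊕ₚ β) (Fin.natAdd α.1 ⟨i, h⟩)
      _ = (finSumFinEquiv
            (Sum.map α.2 β.2 (finSumFinEquiv.symm (Fin.natAdd α.1 ⟨i, h⟩)))).val := rfl
      _ = α.1 + β.2 ⟨i, h⟩ := by rw [finSumFinEquiv_symm_apply_natAdd]; rfl
      _ = α.1 + β.entry i := congrArg (α.1 + ·) (entry_val β ⟨i, h⟩).symm
  · rw [entry_of_le h, entry_of_le (Nat.add_le_add_left h α.1)]

lemma entry_psum (α β : PPerm) (i : ℕ) :
    (α ⊕ₚ β).entry i = if i < α.1 then α.entry i else α.1 + β.entry (i - α.1) := by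
  split_ifs with h
  · exact entry_psum_of_lt β h
  · rw [← entry_psum_add, Nat.add_sub_cancel' (not_lt.mp h)]

lemma psum_assoc (α β γ : PPerm) : (α ⊕ₚ β) ⊕ₚ γ = α ⊕ₚ β ⊕ₚ γ := by
  refine ext_entry (Nat.add_assoc ..) fun i _ ↦ ?_
  simp only [entry_psum, psum_fst, Nat.sub_add_eq]
  split_ifs <;> omega

lemma psum_left_cancel {α β γ : PPerm} (h : α ⊕ₚ β = α ⊕ₚ γ) : β = γ := by
  have hsize : α.1 + β.1 = α.1 + γ.1 := congrArg Sigma.fst h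
  refine ext_entry (Nat.add_left_cancel hsize) fun i _ ↦ Nat.add_left_cancel (n := α.1) ?_
  rw [← entry_psum_add, ← entry_psum_add, h]

lemma psum_inj_of_fst_eq {α β γ δ : PPerm} (h : α ⊕ₚ β = γ ⊕ₚ δ) (hsize : α.1 = γ.1) :
    α = γ ∧ β = δ := by
  obtain rfl : α = γ := ext_entry hsize fun i hi ↦ by
    rw [← entry_psum_of_lt β hi, h, entry_psum_of_lt δ (hsize ▸ hi)]
  exact ⟨rfl, psum_left_cancel h⟩

/-- The increasing permutation of size `n`. -/
def inc (n : ℕ) : PPerm := ⟨n, Equiv.refl _⟩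

@[simp] lemma inc_fst (n : ℕ) : (inc n).1 = n := rfl

@[simp] lemma entry_inc (n i : ℕ) : (inc n).entry i = i := by
  obtain h | h := lt_or_ge i n
  · exact entry_val (inc n) ⟨i, h⟩
  · exact entry_of_le h

lemma eq_inc_zero {α : PPerm} (h : α.1 = 0) : α = inc 0 :=
  ext_entry h fun i hi ↦ by omega

lemma eq_inc_one {α : PPerm} (h : α.1 = 1) : α = inc 1 :=
  ext_entry h fun i hi ↦ by
    have := entry_lt hi
    rw [entry_inc]
    omega

lemma inc_add (m n : ℕ) : inc (m + n) = inc m ⊕ₚ inc n :=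
  ext_entry rfl fun i _ ↦ by
    simp only [entry_psum, entry_inc, inc_fst]
    split_ifs <;> omega

@[simp] lemma inc_zero_psum (α : PPerm) : inc 0 ⊕ₚ α = α :=
  ext_entry (Nat.zero_add _) fun i _ ↦ by simp [entry_psum]

@[simp] lemma psum_inc_zero (α : PPerm) : α ⊕ₚ inc 0 = α :=
  ext_entry rfl fun _ hi ↦ entry_psum_of_lt _ hi

lemma exists_eq_psum_of_forall_entry_lt {τ : PPerm} {k : ℕ} (hk : k ≤ τ.1)
    (h : ∀ i < k, τ.entry i < k) : ∃ α β : PPerm, α.1 = k ∧ τ = α ⊕ₚ β := by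
  have le_entry {i : ℕ} (hi : k ≤ i) : k ≤ τ.entry i := by
    by_contra! hlt
    have hinv := Equiv.Perm.perm_symm_on_of_perm_on_finite (p := (· < k)) h hlt
    rw [Equiv.symm_apply_apply] at hinv
    omega
  obtain ⟨α, rfl, hα⟩ := exists_entry_eq (n := k) (f := τ.entry) h τ.entry.injective.injOn
  obtain ⟨β, hβ, hβ'⟩ := exists_entry_eq (n := τ.1 - α.1) (f := fun i ↦ τ.entry (α.1 + i) - α.1)
    (fun i (hi : i < _) ↦ by
      have := entry_lt (show α.1 + i < τ.1 by omega)
      simp only [Set.mem_Iio]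
      omega)
    (fun i _ j _ hij ↦ by
      have hi := le_entry (Nat.le_add_right α.1 i)
      have hj := le_entry (Nat.le_add_right α.1 j)
      exact Nat.add_left_cancel
        (τ.entry.injective (by simp only at hij; omega : τ.entry (α.1 + i) = τ.entry (α.1 + j))))
  refine ⟨α, β, rfl, ext_entry (by simp; omega) fun i hi ↦ ?_⟩
  rw [entry_psum]
  split_ifs with hiα
  · exact (hα i hiα).symm
  · have := le_entry (not_lt.mp hiα)
    rw [hβ' _ (by omega), Nat.add_sub_cancel' (not_lt.mp hiα)]
    omega

/-! ### Occurrences of patterns -/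

/-- `g` lists the positions of an occurrence of the pattern `π` in `τ`; its values from `π.1` on
are irrelevant. -/
structure IsOccurrence (g : ℕ → ℕ) (π τ : PPerm) : Prop where
  strictMonoOn : StrictMonoOn g (Set.Iio π.1)
  lt {i : ℕ} : i < π.1 → g i < τ.1
  entry_lt_iff {i j : ℕ} : i < π.1 → j < π.1 →
    (π.entry i < π.entry j ↔ τ.entry (g i) < τ.entry (g j))

lemma patternLE_iff_exists_isOccurrence {π τ : PPerm} :
    PatternLE π τ ↔ ∃ g, IsOccurrence g π τ := by
  constructor
  · rintro ⟨g, hg, hord⟩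
    refine ⟨fun i ↦ if h : i < π.1 then g ⟨i, h⟩ else 0, fun i hi j hj hij ↦ ?_, fun hi ↦ ?_,
      fun {i j} hi hj ↦ ?_⟩
    · simpa only [dif_pos (Set.mem_Iio.mp hi), dif_pos (Set.mem_Iio.mp hj), Fin.lt_def] using
        hg (show (⟨i, hi⟩ : Fin π.1) < ⟨j, hj⟩ from hij)
    · simp only [dif_pos hi, Fin.is_lt]
    · simpa only [dif_pos hi, dif_pos hj, Fin.lt_def, ← entry_val] using hord ⟨i, hi⟩ ⟨j, hj⟩
  · rintro ⟨g, hg⟩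
    refine ⟨fun i ↦ ⟨g i, hg.lt i.isLt⟩, fun i j hij ↦ hg.strictMonoOn i.isLt j.isLt hij,
      fun i j ↦ ?_⟩
    rw [Fin.lt_def, Fin.lt_def, ← entry_val, ← entry_val, ← entry_val, ← entry_val]
    exact hg.entry_lt_iff i.isLt j.isLt

lemma patternLE_refl (π : PPerm) : PatternLE π π := ⟨id, strictMono_id, fun _ _ ↦ Iff.rfl⟩

lemma _root_.PatternLE.trans {π σ τ : PPerm} : PatternLE π σ → PatternLE σ τ → PatternLE π τ :=
  fun ⟨g, hg, h⟩ ⟨g', hg', h'⟩ ↦ ⟨g' ∘ g, hg'.comp hg, fun i j ↦ (h i j).trans (h' _ _)⟩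

lemma _root_.PatternLE.psum {α α' β β' : PPerm} (hα : PatternLE α α') (hβ : PatternLE β β') :
    PatternLE (α ⊕ₚ β) (α' ⊕ₚ β') := by
  rw [patternLE_iff_exists_isOccurrence] at *
  obtain ⟨g, hg⟩ := hα
  obtain ⟨g', hg'⟩ := hβ
  refine ⟨fun i ↦ if i < α.1 then g i else α'.1 + g' (i - α.1), fun i hi j hj hij ↦ ?_,
    fun {i} hi ↦ ?_, fun {i j} hi hj ↦ ?_⟩
  · simp only [Set.mem_Iio, psum_fst] at hi hj ⊢
    split_ifs with hi' hj'
    · exact hg.strictMonoOn hi' hj' hij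
    · have := hg.lt hi'
      omega
    · omega
    · have : g' (i - α.1) < g' (j - α.1) :=
        hg'.strictMonoOn (by grind) (by grind) (by omega)
      omega
  · rw [psum_fst] at hi ⊢
    split_ifs with hi'
    · exact Nat.lt_add_right _ (hg.lt hi')
    · exact Nat.add_lt_add_left (hg'.lt (by omega)) _
  · rw [psum_fst] at hi hj
    have entry_eq (k : ℕ) :
        (α' ⊕ₚ β').entry (if k < α.1 then g k else α'.1 + g' (k - α.1)) =
          if k < α.1 then α'.entry (g k) else α'.1 + β'.entry (g' (k - α.1)) := by
      split_ifs with hk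
      · exact entry_psum_of_lt _ (hg.lt hk)
      · exact entry_psum_add ..
    simp only [entry_eq, entry_psum α β]
    split_ifs with hi' hj' hj'
    · exact hg.entry_lt_iff hi' hj'
    · have := entry_lt hi'
      have := entry_lt (hg.lt hi')
      omega
    · have := entry_lt hj'
      have := entry_lt (hg.lt hj')
      omega
    · simpa using hg'.entry_lt_iff (i := i - α.1) (j := j - α.1) (by omega) (by omega)

lemma inc_zero_patternLE (α : PPerm) : PatternLE (inc 0) α :=
  ⟨Fin.elim0, fun i ↦ i.elim0, fun i ↦ i.elim0⟩

lemma patternLE_psum_left (α β : PPerm) : PatternLE α (α ⊕ₚ β) := by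
  simpa only [psum_inc_zero] using (patternLE_refl α).psum (inc_zero_patternLE β)

lemma patternLE_psum_right (α β : PPerm) : PatternLE β (α ⊕ₚ β) := by
  simpa only [inc_zero_psum] using (inc_zero_patternLE α).psum (patternLE_refl β)

lemma inc_patternLE_inc {m n : ℕ} (h : m ≤ n) : PatternLE (inc m) (inc n) := by
  obtain ⟨k, rfl⟩ := Nat.exists_eq_add_of_le h
  rw [inc_add]
  exact patternLE_psum_left _ _

namespace IsOccurrence

lemma split {g : ℕ → ℕ} {α β σ τ : PPerm} (h : IsOccurrence g (α ⊕ₚ β) (σ ⊕ₚ τ))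
    (hg : ∀ i < α.1 + β.1, g i < σ.1 ↔ i < α.1) :
    IsOccurrence g α σ ∧ IsOccurrence (fun i ↦ g (α.1 + i) - σ.1) β τ := by
  have hleft {i : ℕ} (hi : i < α.1) : i < (α ⊕ₚ β).1 := Nat.lt_add_right _ hi
  have hright {i : ℕ} (hi : i < β.1) : α.1 + i < (α ⊕ₚ β).1 := Nat.add_lt_add_left hi _
  have le_g {i : ℕ} (hi : i < β.1) : σ.1 ≤ g (α.1 + i) :=
    not_lt.mp fun hlt ↦ by have := (hg _ (hright hi)).mp hlt; omega
  refine ⟨⟨h.strictMonoOn.mono fun i ↦ hleft, fun hi ↦ (hg _ (hleft hi)).mpr hi,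
    fun {i j} hi hj ↦ ?_⟩, fun i hi j hj hij ↦ ?_, fun {i} hi ↦ ?_, fun {i j} hi hj ↦ ?_⟩
  · rw [← entry_psum_of_lt β hi, ← entry_psum_of_lt β hj,
      ← entry_psum_of_lt τ ((hg _ (hleft hi)).mpr hi),
      ← entry_psum_of_lt τ ((hg _ (hleft hj)).mpr hj)]
    exact h.entry_lt_iff (hleft hi) (hleft hj)
  · have := h.strictMonoOn (hright hi) (hright hj) (Nat.add_lt_add_left hij _)
    have := le_g hi
    change _ - _ < _ - _
    omega
  · have := h.lt (hright hi)
    have := le_g hi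
    rw [psum_fst] at *
    omega
  · have key := h.entry_lt_iff (hright hi) (hright hj)
    rw [entry_psum_add, entry_psum_add, entry_psum σ, entry_psum σ, if_neg (le_g hi).not_gt,
      if_neg (le_g hj).not_gt] at key
    omega

/-- An occurrence that matches a singleton summand of the pattern to a singleton summand splits
there. -/
lemma patternLE_of_apply_eq {g : ℕ → ℕ} {α β σ τ : PPerm}
    (h : IsOccurrence g (α ⊕ₚ inc 1 ⊕ₚ β) (σ ⊕ₚ inc 1 ⊕ₚ τ)) (hg : g α.1 = σ.1) :
    PatternLE α σ ∧ PatternLE β τ := by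
  simp only [patternLE_iff_exists_isOccurrence]
  have hmono {i j : ℕ} (hij : i < j) (hj : j < α.1 + (1 + β.1)) : g i < g j :=
    h.strictMonoOn (hij.trans hj) hj hij
  obtain ⟨hα, h'⟩ := h.split fun i hi ↦ by
    simp only [psum_fst, inc_fst] at hi
    refine ⟨fun hlt ↦ ?_, fun hlt ↦ ?_⟩
    · by_contra! hle
      obtain rfl | hlt' := hle.eq_or_lt
      · omega
      · have := hmono hlt' hi
        omega
    · have := hmono hlt (by omega)
      omega
  obtain ⟨-, hβ⟩ := h'.split fun i hi ↦ by
    simp only [inc_fst] at hi ⊢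
    refine ⟨fun hlt ↦ ?_, fun hlt ↦ ?_⟩
    · by_contra! hle
      have := hmono (show α.1 < α.1 + i by omega) (by omega)
      omega
    · obtain rfl : i = 0 := by omega
      simp [hg]
  exact ⟨⟨_, hα⟩, ⟨_, hβ⟩⟩

end IsOccurrence

/-! ### Blocks and words -/

/-- A block is a sum-indecomposable permutation other than the singleton `inc 1`. -/
def IsBlock (x : PPerm) : Prop := SumIndec x ∧ 2 ≤ x.1

lemma IsBlock.exists_lt_le_entry {x : PPerm} (hx : IsBlock x) {k : ℕ} (hk₀ : 0 < k)
    (hk : k < x.1) : ∃ i < k, k ≤ x.entry i := by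
  by_contra! h
  obtain ⟨α, β, rfl, rfl⟩ := exists_eq_psum_of_forall_entry_lt hk.le h
  exact hx.1.2 ⟨α, β, hk₀, Nat.lt_add_right_iff_pos.mp hk, rfl⟩

lemma IsBlock.entry_zero_pos {x : PPerm} (hx : IsBlock x) : 0 < x.entry 0 := by
  obtain ⟨i, hi, h⟩ := hx.exists_lt_le_entry one_pos hx.2
  rwa [Nat.lt_one_iff.mp hi] at h

lemma IsBlock.exists_inversion {x : PPerm} (hx : IsBlock x) :
    ∃ i j, i < j ∧ j < x.1 ∧ x.entry j < x.entry i := by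
  have hpos := hx.entry_zero_pos
  obtain ⟨j, hj⟩ := x.entry.surjective 0
  refine ⟨0, j, Nat.pos_of_ne_zero ?_, not_le.mp fun hle ↦ ?_, hj ▸ hpos⟩
  · rintro rfl
    exact hpos.ne' hj
  · have := hx.2
    rw [entry_of_le hle] at hj
    omega

lemma IsBlock.fst_le_fst_of_psum_eq {x y α β : PPerm} (hx : 0 < x.1) (hy : IsBlock y)
    (h : x ⊕ₚ α = y ⊕ₚ β) : y.1 ≤ x.1 := by
  by_contra! hlt
  obtain ⟨i, hi, hle⟩ := hy.exists_lt_le_entry hx hlt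
  rw [← entry_psum_of_lt β (hi.trans hlt), ← h, entry_psum_of_lt α hi] at hle
  exact (entry_lt hi).not_ge hle

lemma IsBlock.psum_inj {x y α β : PPerm} (hx : IsBlock x) (hy : IsBlock y)
    (h : x ⊕ₚ α = y ⊕ₚ β) : x = y ∧ α = β :=
  psum_inj_of_fst_eq h <| le_antisymm (hx.fst_le_fst_of_psum_eq hy.1.1 h.symm)
    (hy.fst_le_fst_of_psum_eq hx.1.1 h)

/-- A skeleton is a list of blocks. -/
def IsSkeleton (s : List PPerm) : Prop := ∀ x ∈ s, IsBlock x

lemma isSkeleton_nil : IsSkeleton [] := List.forall_mem_nil _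

lemma isSkeleton_cons {x : PPerm} {s : List PPerm} :
    IsSkeleton (x :: s) ↔ IsBlock x ∧ IsSkeleton s := List.forall_mem_cons

/-- The total size of the permutations in a list. -/
def totalSize (s : List PPerm) : ℕ := (s.map Sigma.fst).sum

@[simp] lemma totalSize_nil : totalSize [] = 0 := rfl

@[simp] lemma totalSize_cons (x : PPerm) (s : List PPerm) :
    totalSize (x :: s) = x.1 + totalSize s := rfl

/-- The sum `inc (c 0) ⊕ x₁ ⊕ inc (c 1) ⊕ x₂ ⊕ ⋯ ⊕ xₖ ⊕ inc (c k)`, where `x₁, …, xₖ` are the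
members of the list. It depends only on the values `c i` with `i ≤ k`. -/
def word : List PPerm → (ℕ → ℕ) → PPerm
  | [], c => inc (c 0)
  | x :: s, c => inc (c 0) ⊕ₚ x ⊕ₚ word s (c ∘ Nat.succ)

lemma word_congr {s : List PPerm} {c c' : ℕ → ℕ} (h : ∀ i ≤ s.length, c i = c' i) :
    word s c = word s c' := by
  induction s generalizing c c' with
  | nil => rw [word, word, h 0 (Nat.zero_le _)]
  | cons x s ih =>
    rw [word, word, h 0 (Nat.zero_le _),
      ih (c := c ∘ Nat.succ) (c' := c' ∘ Nat.succ) fun i hi ↦ h (i + 1) (Nat.succ_le_succ hi)]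

lemma word_fst (s : List PPerm) (c : ℕ → ℕ) :
    (word s c).1 = ∑ i ∈ Finset.range (s.length + 1), c i + totalSize s := by
  induction s generalizing c with
  | nil => simp [word]
  | cons x s ih =>
    simp only [word, psum_fst, inc_fst, ih, List.length_cons, totalSize_cons,
      Finset.sum_range_succ' c, Function.comp_apply, Nat.succ_eq_add_one]
    omega

lemma word_mono {s : List PPerm} {c c' : ℕ → ℕ} (h : ∀ i ≤ s.length, c i ≤ c' i) :
    PatternLE (word s c) (word s c') := by
  induction s generalizing c c' with
  | nil => exact inc_patternLE_inc (h 0 (Nat.zero_le _))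
  | cons x s ih =>
    exact (inc_patternLE_inc (h 0 (Nat.zero_le _))).psum
      ((patternLE_refl x).psum (ih fun i hi ↦ h (i + 1) (Nat.succ_le_succ hi)))

lemma patternLE_word_of_mem {s : List PPerm} {x : PPerm} (hx : x ∈ s) (c : ℕ → ℕ) :
    PatternLE x (word s c) := by
  induction s generalizing c with
  | nil => exact absurd hx List.not_mem_nil
  | cons y s ih =>
    obtain rfl | hx := List.mem_cons.mp hx
    · exact (patternLE_psum_left _ _).trans (patternLE_psum_right _ _)
    · exact (ih hx _).trans ((patternLE_psum_right _ _).trans (patternLE_psum_right _ _))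

lemma inc_one_psum_word (s : List PPerm) (c : ℕ → ℕ) :
    inc 1 ⊕ₚ word s c = word s (Function.update c 0 (1 + c 0)) := by
  have hsucc : Function.update c 0 (1 + c 0) ∘ Nat.succ = c ∘ Nat.succ :=
    Function.update_comp_eq_of_notMem_range _ _ fun ⟨i, hi⟩ ↦ Nat.succ_ne_zero i hi
  cases s with
  | nil => rw [word, word, Function.update_self, inc_add]
  | cons x s => rw [word, word, Function.update_self, inc_add, psum_assoc, hsucc]

lemma exists_psum_word_eq_word (τ : PPerm) {s : List PPerm} (hs : IsSkeleton s) (c : ℕ → ℕ) :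
    ∃ s' c', IsSkeleton s' ∧ τ ⊕ₚ word s c = word s' c' := by
  induction hn : τ.1 using Nat.strong_induction_on generalizing τ s c with
  | _ n ih =>
    subst hn
    obtain hτ | hτ := Nat.eq_zero_or_pos τ.1
    · exact ⟨s, c, hs, by rw [eq_inc_zero hτ, inc_zero_psum]⟩
    by_cases hindec : SumIndec τ
    · obtain hone | htwo := Nat.lt_or_ge τ.1 2
      · rw [eq_inc_one (by omega : τ.1 = 1)]
        exact ⟨s, _, hs, inc_one_psum_word s c⟩
      · exact ⟨τ :: s, fun i ↦ i.casesOn 0 c, isSkeleton_cons.mpr ⟨⟨hindec, htwo⟩, hs⟩,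
          (inc_zero_psum _).symm⟩
    · obtain ⟨α, β, hα, hβ, rfl⟩ := not_not.mp fun h ↦ hindec ⟨hτ, h⟩
      obtain ⟨s', c', hs', h⟩ := ih β.1 (by simp; omega) β hs c rfl
      rw [psum_assoc, h]
      exact ih α.1 (by simp; omega) α hs' c' rfl

lemma exists_eq_word (τ : PPerm) : ∃ s c, IsSkeleton s ∧ τ = word s c := by
  obtain ⟨s, c, hs, h⟩ := exists_psum_word_eq_word τ isSkeleton_nil 0
  exact ⟨s, c, hs, (psum_inc_zero τ).symm.trans h⟩

lemma entry_word_of_lt {s : List PPerm} {c : ℕ → ℕ} {i : ℕ} (hi : i < c 0) :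
    (word s c).entry i = i := by
  cases s with
  | nil => exact entry_inc _ i
  | cons x s => exact (entry_psum_of_lt _ hi).trans (entry_inc _ i)

lemma entry_word_cons_ne {x : PPerm} (hx : IsBlock x) (s : List PPerm) (c : ℕ → ℕ) :
    (word (x :: s) c).entry (c 0) ≠ c 0 := by
  have h := entry_psum_add (inc (c 0)) (x ⊕ₚ word s (c ∘ Nat.succ)) 0
  rw [inc_fst, entry_psum_of_lt _ hx.1.1] at h
  exact fun h' ↦ hx.entry_zero_pos.ne' (Nat.add_eq_left.mp (h.symm.trans h'))

lemma le_of_word_cons_eq_word {x : PPerm} (hx : IsBlock x) {s s' : List PPerm} {c c' : ℕ → ℕ}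
    (h : word (x :: s) c = word s' c') : c' 0 ≤ c 0 :=
  not_lt.mp fun hlt ↦ entry_word_cons_ne hx s c (h ▸ entry_word_of_lt hlt)

lemma word_inj {s s' : List PPerm} {c c' : ℕ → ℕ} (hs : IsSkeleton s) (hs' : IsSkeleton s')
    (h : word s c = word s' c') : s = s' ∧ ∀ i ≤ s.length, c i = c' i := by
  induction s generalizing s' c c' with
  | nil =>
    cases s' with
    | nil =>
      refine ⟨rfl, fun i hi ↦ ?_⟩
      obtain rfl := Nat.le_zero.mp hi
      exact congrArg Sigma.fst h
    | cons y s' =>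
      exact absurd (h ▸ entry_inc _ _) (entry_word_cons_ne (isSkeleton_cons.mp hs').1 s' c')
  | cons x s ih =>
    obtain ⟨hx, htail⟩ := isSkeleton_cons.mp hs
    cases s' with
    | nil => exact absurd (h ▸ entry_inc _ _) (entry_word_cons_ne hx s c)
    | cons y s' =>
      obtain ⟨hy, htail'⟩ := isSkeleton_cons.mp hs'
      have h₀ : c 0 = c' 0 :=
        le_antisymm (le_of_word_cons_eq_word hy h.symm) (le_of_word_cons_eq_word hx h)
      rw [word, word, h₀] at h
      obtain ⟨rfl, hword⟩ := hx.psum_inj hy (psum_left_cancel h)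
      obtain ⟨hss', hc⟩ := ih htail htail' hword
      refine ⟨congrArg _ hss', fun i hi ↦ ?_⟩
      cases i with
      | zero => exact h₀
      | succ i => exact hc i (Nat.le_of_succ_le_succ hi)

/-! ### Runs -/

/-- The position in `word s c` at which its summand `inc (c l)` starts. -/
def runStart (s : List PPerm) (c : ℕ → ℕ) (l : ℕ) : ℕ :=
  ∑ i ∈ Finset.range l, c i + totalSize (s.take l)

/-- The set of positions in `word s c` of its summand `inc (c l)`, for `l ≤ s.length`. -/
def run (s : List PPerm) (c : ℕ → ℕ) (l : ℕ) : Finset ℕ :=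
  Finset.Ico (runStart s c l) (runStart s c l + c l)

section

variable {s : List PPerm} {c : ℕ → ℕ} {l : ℕ}

lemma mem_run {x : ℕ} : x ∈ run s c l ↔ runStart s c l ≤ x ∧ x < runStart s c l + c l :=
  Finset.mem_Ico

@[simp] lemma card_run : (run s c l).card = c l := by
  rw [run, Nat.card_Ico, Nat.add_sub_cancel_left]

lemma runStart_cons_succ (x : PPerm) :
    runStart (x :: s) c (l + 1) = c 0 + x.1 + runStart s (c ∘ Nat.succ) l := by
  simp only [runStart, Finset.sum_range_succ' c, List.take_succ_cons, totalSize_cons,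
    Function.comp_apply, Nat.succ_eq_add_one]
  omega

lemma runStart_succ (hl : l < s.length) :
    runStart s c (l + 1) = runStart s c l + c l + s[l].1 := by
  simp only [runStart, Finset.sum_range_succ, totalSize, List.map_take,
    List.sum_take_succ _ _ (hl.trans_eq (List.length_map Sigma.fst).symm), List.getElem_map]
  omega

lemma runStart_add_le {k : ℕ} (hlk : l < k) (hk : k ≤ s.length) :
    runStart s c l + c l ≤ runStart s c k := by
  induction k, hlk using Nat.le_induction with
  | base => rw [runStart_succ hk]; omega
  | succ k _ ih => rw [runStart_succ hk]; exact (ih (by omega)).trans (by omega)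

lemma disjoint_run {k : ℕ} (hlk : l < k) (hk : k ≤ s.length) :
    Disjoint (run s c l) (run s c k) := by
  refine Finset.disjoint_left.mpr fun x hx hx' ↦ ?_
  have := runStart_add_le (c := c) hlk hk
  rw [mem_run] at hx hx'
  omega

lemma pairwiseDisjoint_run : (Set.Iic s.length).PairwiseDisjoint (run s c) := fun _ hj _ hk hjk ↦
  hjk.lt_or_gt.elim (fun h ↦ disjoint_run h hk) fun h ↦ (disjoint_run h hj).symm

lemma exists_word_update_eq (s : List PPerm) (c : ℕ → ℕ) {l : ℕ} (hl : l ≤ s.length) :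
    ∃ σ τ : PPerm, σ.1 = runStart s c l ∧
      ∀ v, word s (Function.update c l v) = σ ⊕ₚ inc v ⊕ₚ τ := by
  induction s generalizing c l with
  | nil =>
    obtain rfl := Nat.le_zero.mp hl
    exact ⟨inc 0, inc 0, rfl, fun v ↦ by simp [word]⟩
  | cons x s ih =>
    cases l with
    | zero =>
      refine ⟨inc 0, x ⊕ₚ word s (c ∘ Nat.succ), rfl, fun v ↦ ?_⟩
      rw [word, Function.update_self, inc_zero_psum,
        Function.update_comp_eq_of_notMem_range _ _ fun ⟨i, hi⟩ ↦ Nat.succ_ne_zero i hi]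
    | succ l =>
      obtain ⟨σ, τ, hσ, h⟩ := ih (c ∘ Nat.succ) (Nat.le_of_succ_le_succ hl)
      refine ⟨inc (c 0) ⊕ₚ x ⊕ₚ σ, τ, ?_, fun v ↦ ?_⟩
      · rw [runStart_cons_succ, psum_fst, psum_fst, hσ, inc_fst, Nat.add_assoc]
      · rw [word, Function.update_of_ne (Nat.succ_ne_zero l).symm,
          Function.update_comp_eq_of_injective _ Nat.succ_injective, h]
        simp only [psum_assoc]

lemma exists_word_update_eq_of_mem_run (hl : l ≤ s.length) {x : ℕ} (hx : x ∈ run s c l) :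
    ∃ σ τ : PPerm, σ.1 = x ∧ word s c = σ ⊕ₚ inc 1 ⊕ₚ τ ∧
      ∀ v, word s (Function.update c l (c l - 1 + v)) = σ ⊕ₚ inc v ⊕ₚ τ := by
  obtain ⟨σ, τ, hσ, h⟩ := exists_word_update_eq s c hl
  obtain ⟨hle, hlt⟩ := mem_run.mp hx
  obtain ⟨k, rfl⟩ := Nat.exists_eq_add_of_le hle
  have h' (v : ℕ) : word s (Function.update c l (c l - 1 + v)) =
      (σ ⊕ₚ inc k) ⊕ₚ inc v ⊕ₚ inc (c l - 1 - k) ⊕ₚ τ := by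
    rw [h, show c l - 1 + v = k + (v + (c l - 1 - k)) by omega]
    simp only [inc_add, psum_assoc]
  refine ⟨σ ⊕ₚ inc k, inc (c l - 1 - k) ⊕ₚ τ, by rw [psum_fst, hσ, inc_fst], ?_, h'⟩
  rw [← h' 1, Nat.sub_add_cancel (by omega), Function.update_eq_self]

lemma lt_fst_of_mem_run (hl : l ≤ s.length) {x : ℕ} (hx : x ∈ run s c l) : x < (word s c).1 := by
  obtain ⟨σ, τ, rfl, h, -⟩ := exists_word_update_eq_of_mem_run hl hx
  simp [h]

lemma entry_of_mem_run (hl : l ≤ s.length) {x : ℕ} (hx : x ∈ run s c l) :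
    (word s c).entry x = x := by
  obtain ⟨σ, τ, rfl, h, -⟩ := exists_word_update_eq_of_mem_run hl hx
  have h₀ := entry_psum_add σ (inc 1 ⊕ₚ τ) 0
  rwa [entry_psum_of_lt τ (Nat.one_pos : 0 < (inc 1).1), entry_inc, ← h] at h₀

lemma fst_word_update_add (hl : l ≤ s.length) (v : ℕ) :
    (word s (Function.update c l v)).1 + c l = (word s c).1 + v := by
  obtain ⟨σ, τ, -, h⟩ := exists_word_update_eq s c hl
  have hc := h (c l)
  rw [Function.update_eq_self] at hc
  simp only [h, hc, psum_fst, inc_fst]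
  omega

lemma exists_word_eq_psum_getElem (s : List PPerm) (c : ℕ → ℕ) {l : ℕ} (hl : l < s.length) :
    ∃ σ τ : PPerm, σ.1 = runStart s c l + c l ∧ word s c = σ ⊕ₚ s[l] ⊕ₚ τ := by
  induction s generalizing c l with
  | nil => exact absurd hl (Nat.not_lt_zero l)
  | cons x s ih =>
    cases l with
    | zero => exact ⟨inc (c 0), word s (c ∘ Nat.succ), by simp [runStart], rfl⟩
    | succ l =>
      obtain ⟨σ, τ, hσ, h⟩ := ih (c ∘ Nat.succ) (Nat.lt_of_succ_lt_succ hl)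
      refine ⟨inc (c 0) ⊕ₚ x ⊕ₚ σ, τ, ?_, ?_⟩
      · rw [runStart_cons_succ, psum_fst, psum_fst, hσ, inc_fst]
        simp only [Function.comp_apply, Nat.succ_eq_add_one]
        omega
      · simp only [word, h, psum_assoc, List.getElem_cons_succ]

lemma exists_inversion_between_runs (hs : IsSkeleton s) {j k x z : ℕ} (hjk : j < k)
    (hk : k ≤ s.length) (hx : x ∈ run s c j) (hz : z ∈ run s c k) :
    ∃ y y', x < y ∧ y < y' ∧ y' < z ∧ (word s c).entry y' < (word s c).entry y := by
  have hj : j < s.length := hjk.trans_le hk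
  obtain ⟨p, q, hpq, hq, hlt⟩ := (hs _ (List.getElem_mem hj)).exists_inversion
  obtain ⟨σ, τ, hσ, h⟩ := exists_word_eq_psum_getElem s c hj
  have hblock : runStart s c j + c j + s[j].1 ≤ runStart s c k := by
    rw [← runStart_succ hj]
    obtain rfl | hlt := (Nat.succ_le_of_lt hjk).eq_or_lt
    · exact le_rfl
    · exact (Nat.le_add_right _ _).trans (runStart_add_le hlt hk)
  rw [mem_run] at hx hz
  refine ⟨σ.1 + p, σ.1 + q, by omega, by omega, by omega, ?_⟩
  rw [h, entry_psum_add, entry_psum_add, entry_psum_of_lt _ hq,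
    entry_psum_of_lt _ (hpq.trans hq)]
  exact Nat.add_lt_add_left hlt _

end

/-! ### Long runs -/

/-- The indices of the runs of `word s c` of length at least `M`. -/
def longRuns (M : ℕ) (s : List PPerm) (c : ℕ → ℕ) : Finset ℕ :=
  (Finset.range (s.length + 1)).filter (M ≤ c ·)

lemma mem_longRuns {M : ℕ} {s : List PPerm} {c : ℕ → ℕ} {l : ℕ} :
    l ∈ longRuns M s c ↔ l ≤ s.length ∧ M ≤ c l := by
  rw [longRuns, Finset.mem_filter, Finset.mem_range, Nat.lt_succ_iff]

lemma longRuns_anti {M M' : ℕ} (h : M ≤ M') (s : List PPerm) (c : ℕ → ℕ) :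
    longRuns M' s c ⊆ longRuns M s c :=
  Finset.monotone_filter_right _ fun _ _ ↦ h.trans

lemma longRuns_congr {M : ℕ} {s : List PPerm} {c c' : ℕ → ℕ}
    (h : ∀ i ≤ s.length, M ≤ c i ↔ M ≤ c' i) : longRuns M s c = longRuns M s c' :=
  Finset.filter_congr fun i hi ↦ h i (Finset.mem_range_succ_iff.mp hi)

lemma card_range_sdiff_biUnion_run_le (M : ℕ) (s : List PPerm) (c : ℕ → ℕ) :
    (Finset.range (word s c).1 \ (longRuns M s c).biUnion (run s c)).card ≤
      totalSize s + (s.length + 1) * M := by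
  have hsub : (longRuns M s c).biUnion (run s c) ⊆ Finset.range (word s c).1 :=
    Finset.biUnion_subset.mpr fun l hl x hx ↦
      Finset.mem_range.mpr (lt_fst_of_mem_run (mem_longRuns.mp hl).1 hx)
  have hlong : ((longRuns M s c).biUnion (run s c)).card = ∑ l ∈ longRuns M s c, c l := by
    rw [Finset.card_biUnion (pairwiseDisjoint_run.subset fun l hl ↦ (mem_longRuns.mp hl).1)]
    exact Finset.sum_congr rfl fun _ _ ↦ card_run
  have hshort : ∑ l ∈ Finset.range (s.length + 1) with ¬ M ≤ c l, c l ≤ (s.length + 1) * M :=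
    calc
      _ ≤ _ • M := Finset.sum_le_card_nsmul _ _ _ fun l hl ↦
        (not_le.mp (Finset.mem_filter.mp hl).2).le
      _ ≤ (s.length + 1) * M :=
        Nat.mul_le_mul_right M ((Finset.card_filter_le _ _).trans_eq (Finset.card_range _))
  have hsum := Finset.sum_filter_add_sum_filter_not (Finset.range (s.length + 1)) (M ≤ c ·) c
  rw [Finset.card_sdiff_of_subset hsub, hlong, Finset.card_range, word_fst, ← hsum, longRuns]
  omega

section

variable {g : ℕ → ℕ} {r s : List PPerm} {a c : ℕ → ℕ}

lemma IsOccurrence.lt_of_mem_run (h : IsOccurrence g (word r a) (word s c)) (hr : IsSkeleton r)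
    (hs : IsSkeleton s) {j k l m x z : ℕ} (hjk : j < k) (hk : k ≤ r.length) (hl : l ≤ s.length)
    (hx : x ∈ run r a j) (hz : z ∈ run r a k) (hgx : g x ∈ run s c l) (hgz : g z ∈ run s c m) :
    l < m := by
  obtain ⟨y, y', hxy, hyy', hyz, hinv⟩ := exists_inversion_between_runs hr hjk hk hx hz
  have hzlt := lt_fst_of_mem_run hk hz
  have hylt := hyz.trans hzlt
  have hgxy := h.strictMonoOn (hxy.trans (hyy'.trans hylt)) (hyy'.trans hylt) hxy
  have hgyy' := h.strictMonoOn (hyy'.trans hylt) hylt hyy'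
  have hgyz := h.strictMonoOn hylt hzlt hyz
  have hginv := (h.entry_lt_iff hylt (hyy'.trans hylt)).mp hinv
  by_contra! hle
  obtain rfl | hlt := hle.eq_or_lt
  · rw [mem_run] at hgx hgz
    rw [entry_of_mem_run hl (mem_run.mpr (by omega)),
      entry_of_mem_run hl (mem_run.mpr (by omega))] at hginv
    omega
  · obtain ⟨w, w', h₁, h₂, h₃, -⟩ := exists_inversion_between_runs hs hlt hl hgz hgx
    omega

/-- Only `Q` positions of `word s c` lie outside its long runs, so a run of more than `Q` points
must meet one of them; the blocks keep the points met by different runs in different long runs. -/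
lemma IsOccurrence.exists_strictMonoOn_longRuns (h : IsOccurrence g (word r a) (word s c))
    (hr : IsSkeleton r) (hs : IsSkeleton s) {M Q : ℕ}
    (hQ : totalSize s + (s.length + 1) * M ≤ Q) :
    ∃ φ : ℕ → ℕ, StrictMonoOn φ (longRuns (Q + 1) r a) ∧ ∀ j ∈ longRuns (Q + 1) r a,
      φ j ∈ longRuns M s c ∧ ∃ x ∈ run r a j, g x ∈ run s c (φ j) := by
  have hmeet : ∀ j ∈ longRuns (Q + 1) r a,
      ∃ l ∈ longRuns M s c, ∃ x ∈ run r a j, g x ∈ run s c l := by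
    intro j hj
    obtain ⟨hjr, hQj⟩ := mem_longRuns.mp hj
    have hlt {x : ℕ} (hx : x ∈ run r a j) : x < (word r a).1 := lt_fst_of_mem_run hjr hx
    by_contra! hmiss
    have hsub : (run r a j).image g ⊆
        Finset.range (word s c).1 \ (longRuns M s c).biUnion (run s c) := by
      refine Finset.image_subset_iff.mpr fun x hx ↦ Finset.mem_sdiff.mpr
        ⟨Finset.mem_range.mpr (h.lt (hlt hx)), fun hmem ↦ ?_⟩
      obtain ⟨l, hl, hgx⟩ := Finset.mem_biUnion.mp hmem
      exact hmiss l hl x hx hgx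
    have hcard := (Finset.card_le_card hsub).trans (card_range_sdiff_biUnion_run_le M s c)
    rw [Finset.card_image_of_injOn (h.strictMonoOn.injOn.mono fun x ↦ hlt), card_run] at hcard
    omega
  choose! φ hφ x hx hgx using hmeet
  refine ⟨φ, fun j hj k hk hjk ↦ ?_, fun j hj ↦ ⟨hφ j hj, x j, hx j hj, hgx j hj⟩⟩
  exact h.lt_of_mem_run hr hs hjk (mem_longRuns.mp hk).1 (mem_longRuns.mp (hφ j hj)).1
    (hx j hj) (hx k hk) (hgx j hj) (hgx k hk)

end

/-- The index of the `k`-th run of `word s c` of length at least `M`, out of `d` such runs. -/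
def longRun {M d : ℕ} {s : List PPerm} {c : ℕ → ℕ} (h : (longRuns M s c).card = d) (k : Fin d) :
    ℕ :=
  (longRuns M s c).orderEmbOfFin h k

section

variable {M d : ℕ} {s : List PPerm} {c : ℕ → ℕ} (h : (longRuns M s c).card = d)

lemma longRun_mem (k : Fin d) : longRun h k ∈ longRuns M s c :=
  Finset.orderEmbOfFin_mem _ h k

lemma longRun_le_length (k : Fin d) : longRun h k ≤ s.length :=
  (mem_longRuns.mp (longRun_mem h k)).1

lemma le_apply_longRun (k : Fin d) : M ≤ c (longRun h k) :=
  (mem_longRuns.mp (longRun_mem h k)).2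

lemma longRun_injective : Function.Injective (longRun h) :=
  (Finset.orderEmbOfFin _ h).injective

lemma longRun_congr {M' : ℕ} {c' : ℕ → ℕ} (h' : (longRuns M' s c').card = d)
    (heq : longRuns M s c = longRuns M' s c') (k : Fin d) : longRun h k = longRun h' k := by
  simp only [longRun, heq]

end

section

variable {g : ℕ → ℕ} {r s : List PPerm} {a c : ℕ → ℕ}

lemma IsOccurrence.card_longRuns_le (h : IsOccurrence g (word r a) (word s c))
    (hr : IsSkeleton r) (hs : IsSkeleton s) {M Q : ℕ}
    (hQ : totalSize s + (s.length + 1) * M ≤ Q) :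
    (longRuns (Q + 1) r a).card ≤ (longRuns M s c).card := by
  obtain ⟨φ, hmono, hφ⟩ := h.exists_strictMonoOn_longRuns hr hs hQ
  exact Finset.card_le_card_of_injOn φ (fun j hj ↦ (hφ j hj).1) hmono.injOn

lemma IsOccurrence.exists_mem_run_longRun (h : IsOccurrence g (word r a) (word s c))
    (hr : IsSkeleton r) (hs : IsSkeleton s) {M Q d : ℕ}
    (hQ : totalSize s + (s.length + 1) * M ≤ Q) (ha : (longRuns (Q + 1) r a).card = d)
    (hc : (longRuns M s c).card = d) (k : Fin d) :
    ∃ x ∈ run r a (longRun ha k), g x ∈ run s c (longRun hc k) := by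
  obtain ⟨φ, hmono, hφ⟩ := h.exists_strictMonoOn_longRuns hr hs hQ
  have hunique : φ ∘ longRun ha = longRun hc :=
    Finset.orderEmbOfFin_unique hc (fun k ↦ (hφ _ (longRun_mem ha k)).1) fun k k' hkk' ↦
      hmono (longRun_mem ha k) (longRun_mem ha k') (OrderEmbedding.strictMono _ hkk')
  rw [← hunique]
  exact (hφ _ (longRun_mem ha k)).2

lemma IsOccurrence.word_update_patternLE (h : IsOccurrence g (word r a) (word s c)) {j l x : ℕ}
    (hj : j ≤ r.length) (hl : l ≤ s.length) (hx : x ∈ run r a j) (hgx : g x ∈ run s c l) (v : ℕ) :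
    PatternLE (word r (Function.update a j (a j - 1 + v)))
      (word s (Function.update c l (c l - 1 + v))) := by
  obtain ⟨α, β, rfl, hα, hαv⟩ := exists_word_update_eq_of_mem_run hj hx
  obtain ⟨σ, τ, hσ, hτ, hτv⟩ := exists_word_update_eq_of_mem_run hl hgx
  rw [hα, hτ] at h
  obtain ⟨hασ, hβτ⟩ := h.patternLE_of_apply_eq hσ.symm
  rw [hαv, hτv]
  exact hασ.psum ((patternLE_refl _).psum hβτ)

end

/-! ### Moving a point between runs -/

/-- The run lengths `c` after moving one point from run `l`, assumed nonempty, to run `l'`. -/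
def moveOne (c : ℕ → ℕ) (l l' : ℕ) : ℕ → ℕ :=
  Function.update (Function.update c l (c l - 1)) l' (c l' + 1)

section

variable {c : ℕ → ℕ} {l l' : ℕ}

lemma moveOne_apply_left (h : l ≠ l') : moveOne c l l' l = c l - 1 := by
  rw [moveOne, Function.update_of_ne h, Function.update_self]

@[simp] lemma moveOne_apply_right : moveOne c l l' l' = c l' + 1 :=
  Function.update_self ..

lemma moveOne_apply_of_ne {i : ℕ} (h : i ≠ l) (h' : i ≠ l') : moveOne c l l' i = c i := by
  rw [moveOne, Function.update_of_ne h', Function.update_of_ne h]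

lemma moveOne_moveOne (h : l ≠ l') (hl : 0 < c l) : moveOne (moveOne c l l') l' l = c := by
  ext i
  rcases eq_or_ne i l with rfl | hi
  · rw [moveOne_apply_right, moveOne_apply_left h, Nat.sub_add_cancel hl]
  rcases eq_or_ne i l' with rfl | hi'
  · rw [moveOne_apply_left hi, moveOne_apply_right, Nat.add_sub_cancel]
  · rw [moveOne_apply_of_ne hi' hi, moveOne_apply_of_ne hi hi']

lemma le_moveOne_iff {M : ℕ} (h : l ≠ l') (hl : M < c l) (hl' : M ≤ c l') (i : ℕ) :
    M ≤ moveOne c l l' i ↔ M ≤ c i := by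
  rcases eq_or_ne i l with rfl | hi
  · rw [moveOne_apply_left h]; omega
  rcases eq_or_ne i l' with rfl | hi'
  · rw [moveOne_apply_right]; omega
  · rw [moveOne_apply_of_ne hi hi']

lemma longRuns_moveOne {M : ℕ} (s : List PPerm) (h : l ≠ l') (hl : M < c l) (hl' : M ≤ c l') :
    longRuns M s (moveOne c l l') = longRuns M s c :=
  longRuns_congr fun i _ ↦ le_moveOne_iff h hl hl' i

lemma longRuns_update_sub_one {M : ℕ} (s : List PPerm) (hl : M < c l) :
    longRuns M s (Function.update c l (c l - 1)) = longRuns M s c :=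
  longRuns_congr fun i _ ↦ by
    rcases eq_or_ne i l with rfl | hi
    · rw [Function.update_self]; omega
    · rw [Function.update_of_ne hi]

lemma min_moveOne {N : ℕ} (h : l ≠ l') (hl : N < c l) (hl' : N ≤ c l') (i : ℕ) :
    min (moveOne c l l' i) N = min (c i) N := by
  rcases eq_or_ne i l with rfl | hi
  · rw [moveOne_apply_left h]; omega
  rcases eq_or_ne i l' with rfl | hi'
  · rw [moveOne_apply_right]; omega
  · rw [moveOne_apply_of_ne hi hi']

lemma fst_word_moveOne {s : List PPerm} (h : l ≠ l') (hl : l ≤ s.length) (hl' : l' ≤ s.length)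
    (hc : 0 < c l) : (word s (moveOne c l l')).1 = (word s c).1 := by
  have h₁ := fst_word_update_add (c := c) hl (c l - 1)
  have h₂ := fst_word_update_add (c := Function.update c l (c l - 1)) hl' (c l' + 1)
  rw [Function.update_of_ne h.symm] at h₂
  rw [moveOne]
  omega

end

section

variable {r s : List PPerm} {a c : ℕ → ℕ} {N Q d : ℕ}

lemma lt_apply_longRun_of_patternLE (hr : IsSkeleton r) (hs : IsSkeleton s)
    (hQ : totalSize s + (s.length + 1) * (N + 1) ≤ Q) (ha : (longRuns (Q + 1) r a).card = d)
    (hc : (longRuns N s c).card = d) (hle : PatternLE (word r a) (word s c)) (k : Fin d) :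
    N < c (longRun hc k) := by
  obtain ⟨g, hg⟩ := patternLE_iff_exists_isOccurrence.mp hle
  have hsub := longRuns_anti N.le_succ s c
  have heq : longRuns (N + 1) s c = longRuns N s c :=
    Finset.eq_of_subset_of_card_le hsub ((hc.trans ha.symm).trans_le (hg.card_longRuns_le hr hs hQ))
  exact (mem_longRuns.mp (heq ▸ longRun_mem hc k)).2

/-- Long runs of the pattern correspond in order to long runs of `word s c`. Take out a point that
run `k` of the pattern occupies, re-embed what is left, and put a point back into run `k'`. -/
lemma word_moveOne_patternLE (hr : IsSkeleton r) (hs : IsSkeleton s)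
    (hQ : totalSize s + (s.length + 1) * N ≤ Q) (ha : (longRuns (Q + 1) r a).card = d)
    (hc : (longRuns N s c).card = d) (hle : PatternLE (word r a) (word s c)) {k k' : Fin d}
    (hk : k ≠ k') (hak : Q + 1 < a (longRun ha k)) (hck : N < c (longRun hc k)) :
    PatternLE (word r (moveOne a (longRun ha k) (longRun ha k')))
      (word s (moveOne c (longRun hc k) (longRun hc k'))) := by
  have ha' := longRuns_update_sub_one r hak
  have hc' := longRuns_update_sub_one s hck
  have hne := (longRun_injective ha).ne hk.symm
  have hne' := (longRun_injective hc).ne hk.symm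
  have hpos : 0 < a (longRun ha k') := Q.succ_pos.trans_le (le_apply_longRun ha k')
  obtain ⟨g, hg⟩ := patternLE_iff_exists_isOccurrence.mp hle
  obtain ⟨x, hx, hgx⟩ := hg.exists_mem_run_longRun hr hs hQ ha hc k
  have hout := hg.word_update_patternLE (longRun_le_length ha k) (longRun_le_length hc k) hx hgx 0
  obtain ⟨g', hg'⟩ := patternLE_iff_exists_isOccurrence.mp hout
  obtain ⟨y, hy, hgy⟩ := hg'.exists_mem_run_longRun hr hs hQ
    ((congrArg _ ha').trans ha) ((congrArg _ hc').trans hc) k'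
  rw [longRun_congr _ ha ha'] at hy
  rw [longRun_congr _ hc hc'] at hgy
  have hin := hg'.word_update_patternLE (longRun_le_length ha k') (longRun_le_length hc k') hy hgy 2
  simp only [Nat.add_zero, Function.update_of_ne hne, Function.update_of_ne hne', mem_run]
    at hin hgy
  rwa [moveOne, moveOne, show a (longRun ha k') + 1 = a (longRun ha k') - 1 + 2 by omega,
    show c (longRun hc k') + 1 = c (longRun hc k') - 1 + 2 by omega]

end

/-! ### Constants of a class with finitely many skeletons -/

/-- The skeletons of the words in `C`. -/
def skeletons (C : Set PPerm) : Set (List PPerm) :=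
  {s | IsSkeleton s ∧ ∃ c, word s c ∈ C}

/-- Membership of `word s c` in `C` does not change with run lengths that stay at least `N`, `d` is
the maximal number of runs of length at least `N` in a word of `C`, and `Q` bounds the number of
points outside the runs of length greater than `N`. -/
structure RunControl (C : Set PPerm) (N d Q : ℕ) : Prop where
  mem_iff {s : List PPerm} {c c' : ℕ → ℕ} (hs : IsSkeleton s)
    (h : ∀ i ≤ s.length, min (c i) N = min (c' i) N) : word s c ∈ C ↔ word s c' ∈ C
  card_longRuns_le {s : List PPerm} {c : ℕ → ℕ} (hs : IsSkeleton s) (h : word s c ∈ C) :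
    (longRuns N s c).card ≤ d
  exists_card_longRuns_eq : ∃ s c, IsSkeleton s ∧ word s c ∈ C ∧ (longRuns N s c).card = d
  size_le {s : List PPerm} (hs : s ∈ skeletons C) : totalSize s + (s.length + 1) * (N + 1) ≤ Q

/-- By Dickson's lemma the complement has finitely many minimal elements; take `N` above all their
coordinates. -/
lemma exists_forall_min_eq_mem_iff {ι : Type*} [Finite ι] {U : Set (ι → ℕ)} (hU : IsLowerSet U) :
    ∃ N, ∀ c c' : ι → ℕ, (∀ i, min (c i) N = min (c' i) N) → (c ∈ U ↔ c' ∈ U) := by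
  have hfin : {m : ι → ℕ | Minimal (· ∉ U) m}.Finite :=
    WellQuasiOrderedLE.finite_of_isAntichain (setOfPred_minimal_antichain _)
  obtain ⟨b, hb⟩ := hfin.bddAbove
  obtain ⟨N, hN⟩ := (Set.finite_range b).bddAbove
  have hmem (c c' : ι → ℕ) (h : ∀ i, min (c i) N = min (c' i) N) (hc : c ∈ U) : c' ∈ U := by
    by_contra hc'
    obtain ⟨m, hmc', hm⟩ := exists_minimal_le_of_wellFoundedLT (· ∉ U) c' hc'
    refine hm.prop (hU (fun i ↦ ?_) hc)
    exact (le_min (hmc' i) ((hb hm i).trans (hN ⟨i, rfl⟩))).trans ((h i).ge.trans (min_le_left _ _))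
  exact ⟨N, fun c c' h ↦ ⟨hmem c c' h, hmem c' c fun i ↦ (h i).symm⟩⟩

lemma exists_forall_min_eq_word_mem_iff {C : Set PPerm} (hclass : IsPermClass C)
    (s : List PPerm) : ∃ N, ∀ c c', (∀ i ≤ s.length, min (c i) N = min (c' i) N) →
      (word s c ∈ C ↔ word s c' ∈ C) := by
  have hlower : IsLowerSet {f : Fin (s.length + 1) → ℕ | word s (f ∘ Fin.ofNat _) ∈ C} :=
    fun f f' hle hf ↦ hclass _ _ (word_mono fun i _ ↦ hle _) hf
  have hword (c : ℕ → ℕ) :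
      word s ((c ∘ Fin.val : Fin (s.length + 1) → ℕ) ∘ Fin.ofNat _) = word s c :=
    word_congr fun i hi ↦ congrArg c (Nat.mod_eq_of_lt (Nat.lt_succ_of_le hi))
  obtain ⟨N, hN⟩ := exists_forall_min_eq_mem_iff hlower
  refine ⟨N, fun c c' h ↦ ?_⟩
  have := hN (c ∘ Fin.val) (c' ∘ Fin.val) fun i ↦ h i (Nat.le_of_lt_succ i.2)
  rwa [Set.mem_ofPred_eq, Set.mem_ofPred_eq, hword, hword] at this

lemma exists_runControl {C : Set PPerm} (hclass : IsPermClass C) (hne : C.Nonempty)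
    (hfin : (skeletons C).Finite) : ∃ N d Q, RunControl C N d Q := by
  choose n hn using exists_forall_min_eq_word_mem_iff hclass
  obtain ⟨N, hN⟩ := (hfin.image n).bddAbove
  obtain ⟨Q, hQ⟩ :=
    (hfin.image fun s ↦ totalSize s + (s.length + 1) * (N + 1)).bddAbove
  have hmem_iff {s : List PPerm} {c c' : ℕ → ℕ} (hs : IsSkeleton s)
      (h : ∀ i ≤ s.length, min (c i) N = min (c' i) N) : word s c ∈ C → word s c' ∈ C := fun hc ↦ by
    have hns : n s ≤ N := hN ⟨s, ⟨hs, c, hc⟩, rfl⟩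
    refine (hn s c c' fun i hi ↦ ?_).mp hc
    have := h i hi
    omega
  let D := {k | ∃ s c, IsSkeleton s ∧ word s c ∈ C ∧ (longRuns N s c).card = k}
  have hbdd : BddAbove D := by
    refine ⟨Q, ?_⟩
    rintro _ ⟨s, c, hs, hc, rfl⟩
    have hQs : totalSize s + (s.length + 1) * (N + 1) ≤ Q := hQ ⟨s, ⟨hs, c, hc⟩, rfl⟩
    calc (longRuns N s c).card
        ≤ s.length + 1 := (Finset.card_filter_le _ _).trans_eq (Finset.card_range _)
      _ ≤ (s.length + 1) * (N + 1) := Nat.le_mul_of_pos_right _ N.succ_pos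
      _ ≤ Q := (Nat.le_add_left _ _).trans hQs
  have hDne : D.Nonempty := by
    obtain ⟨τ, hτ⟩ := hne
    obtain ⟨s, c, hs, rfl⟩ := exists_eq_word τ
    exact ⟨_, s, c, hs, hτ, rfl⟩
  exact ⟨N, sSup D, Q, fun hs h ↦ ⟨hmem_iff hs h, hmem_iff hs fun i hi ↦ (h i hi).symm⟩,
    fun hs hc ↦ le_csSup hbdd ⟨_, _, hs, hc, rfl⟩, Nat.sSup_mem hDne hbdd,
    fun hs ↦ hQ ⟨_, hs, rfl⟩⟩

/-! ### Wilf equivalence -/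

lemma finite_fst_eq (n : ℕ) : {τ : PPerm | τ.1 = n}.Finite :=
  (Set.finite_range (Sigma.mk n)).subset fun τ hτ ↦ ⟨hτ ▸ τ.2, by subst hτ; rfl⟩

/-- The permutations of size `n` in `C` containing `α`; they are easier to transport along an
embedding argument than those avoiding `α`. -/
def containers (C : Set PPerm) (α : PPerm) (n : ℕ) : Set PPerm :=
  {τ | τ ∈ C ∧ τ.1 = n ∧ PatternLE α τ}

lemma finite_containers (C : Set PPerm) (α : PPerm) (n : ℕ) : (containers C α n).Finite :=
  (finite_fst_eq n).subset fun _ h ↦ h.2.1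

lemma ncard_containers_add_avcnt (C : Set PPerm) (α : PPerm) (n : ℕ) :
    (containers C α n).ncard + avcnt C α n = cnt C n := by
  have h := Set.ncard_inter_add_ncard_sdiff_eq_ncard {τ : PPerm | τ ∈ C ∧ τ.1 = n}
    {τ | PatternLE α τ} ((finite_fst_eq n).subset fun _ h ↦ h.2)
  rw [cnt, ← h, containers, avcnt]
  congr 2 <;> ext τ <;>
    simp only [Set.mem_inter_iff, Set.mem_sdiff, Set.mem_ofPred_eq, and_assoc]

lemma wilfEq_of_ncard_containers_eq {C : Set PPerm} {α β : PPerm}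
    (h : ∀ n, (containers C α n).ncard = (containers C β n).ncard) : WilfEq C α β := fun n ↦ by
  have hα := ncard_containers_add_avcnt C α n
  have hβ := ncard_containers_add_avcnt C β n
  have := h n
  omega

lemma word_eq_of_word_moveOne_longRun_eq {s s' : List PPerm} {c c' : ℕ → ℕ} {N d : ℕ}
    (hs : IsSkeleton s) (hs' : IsSkeleton s') (hc : (longRuns N s c).card = d)
    (hc' : (longRuns N s' c').card = d) {k k' : Fin d} (hk : k ≠ k')
    (hck : N < c (longRun hc k)) (hck' : N < c' (longRun hc' k))
    (h : word s (moveOne c (longRun hc k) (longRun hc k')) =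
      word s' (moveOne c' (longRun hc' k) (longRun hc' k'))) : word s c = word s' c' := by
  obtain ⟨rfl, heq⟩ := word_inj hs hs' h
  have hne := (longRun_injective hc).ne hk
  have hne' := (longRun_injective hc').ne hk
  have hlong : longRuns N s c = longRuns N s c' := by
    rw [← longRuns_moveOne s hne hck (le_apply_longRun hc k'),
      ← longRuns_moveOne s hne' hck' (le_apply_longRun hc' k')]
    exact longRuns_congr fun i hi ↦ by rw [heq i hi]
  have hrun := longRun_congr hc hc' hlong
  rw [← hrun, ← hrun] at heq
  refine word_congr fun i hi ↦ ?_
  have hi := heq i hi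
  rcases eq_or_ne i (longRun hc k) with rfl | hik
  · rw [moveOne_apply_left hne, moveOne_apply_left hne] at hi
    rw [← hrun] at hck'
    omega
  rcases eq_or_ne i (longRun hc k') with rfl | hik'
  · simpa using hi
  · rwa [moveOne_apply_of_ne hik hik', moveOne_apply_of_ne hik hik'] at hi

section

variable {C : Set PPerm} {N d Q : ℕ}

lemma RunControl.le_of_mem_skeletons (hC : RunControl C N d Q) {s : List PPerm}
    (hs : s ∈ skeletons C) : N ≤ Q :=
  calc N ≤ (s.length + 1) * (N + 1) := N.le_succ.trans (Nat.le_mul_of_pos_left _ s.length.succ_pos)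
    _ ≤ Q := (Nat.le_add_left _ _).trans (hC.size_le hs)

lemma RunControl.word_moveOne_mem_iff (hC : RunControl C N d Q) {s : List PPerm} {c : ℕ → ℕ}
    (hs : IsSkeleton s) {l l' : ℕ} (h : l ≠ l') (hl : N < c l) (hl' : N ≤ c l') :
    word s (moveOne c l l') ∈ C ↔ word s c ∈ C :=
  hC.mem_iff hs fun i _ ↦ min_moveOne h hl hl' i

lemma RunControl.ncard_containers_le (hC : RunControl C N d Q) {r : List PPerm} {a : ℕ → ℕ}
    (hr : IsSkeleton r) (ha : (longRuns (Q + 1) r a).card = d) {k k' : Fin d} (hk : k ≠ k')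
    (hak : Q + 1 < a (longRun ha k)) (n : ℕ) :
    (containers C (word r a) n).ncard ≤
      (containers C (word r (moveOne a (longRun ha k) (longRun ha k'))) n).ncard := by
  have hmove : ∀ τ ∈ containers C (word r a) n,
      ∃ τ' ∈ containers C (word r (moveOne a (longRun ha k) (longRun ha k'))) n,
      ∃ s c, IsSkeleton s ∧ word s c = τ ∧ ∃ hc : (longRuns N s c).card = d,
        N < c (longRun hc k) ∧ word s (moveOne c (longRun hc k) (longRun hc k')) = τ' := by
    rintro τ ⟨hτ, rfl, hle⟩
    obtain ⟨s, c, hs, rfl⟩ := exists_eq_word τ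
    have hQ := hC.size_le ⟨hs, c, hτ⟩
    have hQN : totalSize s + (s.length + 1) * N ≤ Q := le_trans (by gcongr; exact N.le_succ) hQ
    have hc : (longRuns N s c).card = d := by
      obtain ⟨g, hg⟩ := patternLE_iff_exists_isOccurrence.mp hle
      exact (hC.card_longRuns_le hs hτ).antisymm (ha.symm.trans_le (hg.card_longRuns_le hr hs hQN))
    have hck := lt_apply_longRun_of_patternLE hr hs hQ ha hc hle k
    have hne := (longRun_injective hc).ne hk
    exact ⟨_, ⟨(hC.word_moveOne_mem_iff hs hne hck (le_apply_longRun hc k')).mpr hτ,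
      fst_word_moveOne hne (longRun_le_length hc k) (longRun_le_length hc k') (by omega),
      word_moveOne_patternLE hr hs hQN ha hc hle hk hak hck⟩, s, c, hs, rfl, hc, hck, rfl⟩
  choose! f hf s c hs hτ hc hck hfτ using hmove
  refine Set.ncard_le_ncard_of_injOn f hf (fun τ h τ' h' heq ↦ ?_) (finite_containers _ _ _)
  rw [← hτ τ h, ← hτ τ' h']
  exact word_eq_of_word_moveOne_longRun_eq (hs τ h) (hs τ' h') (hc τ h) (hc τ' h') hk (hck τ h)
    (hck τ' h') ((hfτ τ h).trans (heq.trans (hfτ τ' h').symm))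

lemma RunControl.wilfEq_moveOne (hC : RunControl C N d Q) {r : List PPerm} {a : ℕ → ℕ}
    (hr : IsSkeleton r) (ha : (longRuns (Q + 1) r a).card = d) {k k' : Fin d} (hk : k ≠ k')
    (hak : Q + 1 < a (longRun ha k)) :
    WilfEq C (word r a) (word r (moveOne a (longRun ha k) (longRun ha k'))) := by
  have hne := (longRun_injective ha).ne hk
  have heq := longRuns_moveOne r hne hak (le_apply_longRun ha k')
  have hrun := longRun_congr ((congrArg _ heq).trans ha) ha heq
  have hak' := le_apply_longRun ha k'
  refine wilfEq_of_ncard_containers_eq fun n ↦ (hC.ncard_containers_le hr ha hk hak n).antisymm ?_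
  have hback := hC.ncard_containers_le hr ((congrArg _ heq).trans ha) hk.symm
    (by rw [hrun, moveOne_apply_right]; omega) n
  rwa [hrun, hrun, moveOne_moveOne hne (by omega)] at hback

lemma RunControl.exists_wilfEq_card_longRuns_lt_of_eq (hC : RunControl C N d Q)
    {r : List PPerm} {a : ℕ → ℕ} (hr : IsSkeleton r) (ha : (longRuns (Q + 1) r a).card = d)
    {k k' : Fin d} (hk : k ≠ k') :
    ∃ b, (word r b).1 = (word r a).1 ∧ WilfEq C (word r a) (word r b) ∧
      (longRuns (Q + 2) r b).card < d := by
  induction hm : a (longRun ha k) using Nat.strong_induction_on generalizing a with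
  | _ m ih =>
  subst hm
  have hne := (longRun_injective ha).ne hk
  have hak := le_apply_longRun ha k
  rcases hak.eq_or_lt with heq | hlt
  · refine ⟨a, rfl, fun _ ↦ rfl, ?_⟩
    rw [← ha]
    refine Finset.card_lt_card ((Finset.ssubset_iff_of_subset
      (longRuns_anti (Q + 1).le_succ r a)).mpr ⟨_, longRun_mem ha k, fun h ↦ ?_⟩)
    have := (mem_longRuns.mp h).2
    omega
  · have hlong := longRuns_moveOne r hne hlt (le_apply_longRun ha k')
    have hrun := longRun_congr ((congrArg _ hlong).trans ha) ha hlong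
    obtain ⟨b, hsize, hwilf, hcard⟩ := ih _
      (by rw [hrun, moveOne_apply_left hne]; omega) ((congrArg _ hlong).trans ha) rfl
    exact ⟨b, hsize.trans (fst_word_moveOne hne (longRun_le_length ha k)
      (longRun_le_length ha k') (by omega)),
      fun n ↦ (hC.wilfEq_moveOne hr ha hk hlt n).trans (hwilf n), hcard⟩

lemma RunControl.exists_wilfEq_card_longRuns_lt (hC : RunControl C N d Q) (hd : 2 ≤ d)
    {r : List PPerm} {a : ℕ → ℕ} (hr : IsSkeleton r) (hmem : word r a ∈ C) :
    ∃ b, (word r b).1 = (word r a).1 ∧ WilfEq C (word r a) (word r b) ∧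
      (longRuns (Q + 2) r b).card < d := by
  have hNQ := hC.le_of_mem_skeletons ⟨hr, a, hmem⟩
  have hle := (Finset.card_le_card (longRuns_anti (by omega : N ≤ Q + 1) r a)).trans
    (hC.card_longRuns_le hr hmem)
  rcases hle.eq_or_lt with ha | hlt
  · exact hC.exists_wilfEq_card_longRuns_lt_of_eq hr ha
      (k := ⟨0, by omega⟩) (k' := ⟨1, hd⟩) (by simp)
  · exact ⟨a, rfl, fun _ ↦ rfl,
      (Finset.card_le_card (longRuns_anti (Q + 1).le_succ r a)).trans_lt hlt⟩

end

/-! ### Counting words -/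

lemma isBigO_natCast_pow_of_le {p q : ℕ} (h : p ≤ q) :
    (fun n : ℕ ↦ (n : ℝ) ^ p) =O[atTop] fun n ↦ (n : ℝ) ^ q :=
  (isBigO_pow_pow_cobounded_of_le h).comp_tendsto tendsto_natCast_atTop_cobounded

lemma isLittleO_natCast_pow_of_lt {p q : ℕ} (h : p < q) :
    (fun n : ℕ ↦ (n : ℝ) ^ p) =o[atTop] fun n ↦ (n : ℝ) ^ q :=
  (isLittleO_pow_pow_atTop_of_lt h).comp_tendsto tendsto_natCast_atTop_atTop

lemma isTheta_choose_sub_add (B k : ℕ) :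
    (fun n : ℕ ↦ ((n - B + k).choose k : ℝ)) =Θ[atTop] fun n ↦ (n : ℝ) ^ k := by
  have htend : Tendsto (fun n : ℕ ↦ n - B + k) atTop atTop :=
    tendsto_atTop_mono (fun n ↦ Nat.le_add_right _ _) (tendsto_sub_atTop_nat B)
  have hcomp : (fun n : ℕ ↦ ((n - B + k).choose k : ℝ)) =Θ[atTop]
      fun n ↦ ((n - B + k : ℕ) : ℝ) ^ k :=
    ⟨(isTheta_choose k).1.comp_tendsto htend, (isTheta_choose k).2.comp_tendsto htend⟩
  refine hcomp.trans (IsTheta.pow ⟨?_, ?_⟩ k)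
  · refine .of_bound (1 + k) ((eventually_ge_atTop 1).mono fun n hn ↦ ?_)
    simp only [Real.norm_natCast]
    have : n - B + k ≤ (1 + k) * n := by nlinarith [Nat.sub_le n B]
    exact_mod_cast this
  · refine .of_bound 2 ((eventually_ge_atTop (2 * B)).mono fun n hn ↦ ?_)
    simp only [Real.norm_natCast]
    have : n ≤ 2 * (n - B + k) := by omega
    exact_mod_cast this

/-- The permutations of size `n` obtained from `word s b` by lengthening runs with index in `J`. -/
def lengthenings (s : List PPerm) (b : ℕ → ℕ) (J : Finset ℕ) (n : ℕ) : Set PPerm :=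
  {τ | τ.1 = n ∧ ∃ f : ℕ →₀ ℕ, f.support ⊆ J ∧ word s (b + f) = τ}

section

variable {s : List PPerm} {b : ℕ → ℕ} {J : Finset ℕ}

lemma fst_word_add (hJ : J ⊆ Finset.range (s.length + 1)) {f : ℕ →₀ ℕ} (hf : f.support ⊆ J) :
    (word s (b + f)).1 = (word s b).1 + ∑ i ∈ J, f i := by
  have hsum : ∑ i ∈ J, f i = ∑ i ∈ Finset.range (s.length + 1), f i :=
    Finset.sum_subset hJ fun i _ hi ↦ Finsupp.notMem_support_iff.mp fun h ↦ hi (hf h)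
  simp only [word_fst, Pi.add_apply, Finset.sum_add_distrib, hsum]
  omega

lemma lengthenings_eq_image (hJ : J ⊆ Finset.range (s.length + 1)) (m : ℕ) :
    lengthenings s b J ((word s b).1 + m) =
      (fun f : ℕ →₀ ℕ ↦ word s (b + f)) '' (J.finsuppAntidiag m) := by
  ext τ
  constructor
  · rintro ⟨hsize, f, hf, rfl⟩
    rw [fst_word_add hJ hf, Nat.add_left_cancel_iff] at hsize
    exact ⟨f, Finset.mem_finsuppAntidiag.mpr ⟨hsize, hf⟩, rfl⟩
  · rintro ⟨f, hmem, rfl⟩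
    obtain ⟨hsum, hf⟩ := Finset.mem_finsuppAntidiag.mp hmem
    exact ⟨by rw [fst_word_add hJ hf, hsum], f, hf, rfl⟩

lemma ncard_lengthenings (hs : IsSkeleton s) (hJ : J ⊆ Finset.range (s.length + 1)) (m : ℕ) :
    (lengthenings s b J ((word s b).1 + m)).ncard = (J.card + m - 1).choose m := by
  rw [lengthenings_eq_image hJ, Set.InjOn.ncard_image, Set.ncard_coe_finset,
    Finset.card_finsuppAntidiag_nat_eq_choose]
  intro f hf f' hf' h
  obtain ⟨-, heq⟩ := word_inj hs hs h
  ext i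
  by_cases hi : i ∈ J
  · exact Nat.add_left_cancel (heq i (Finset.mem_range_succ_iff.mp (hJ hi)))
  · rw [Finsupp.notMem_support_iff.mp fun h ↦ hi ((Finset.mem_finsuppAntidiag.mp hf).2 h),
      Finsupp.notMem_support_iff.mp fun h ↦ hi ((Finset.mem_finsuppAntidiag.mp hf').2 h)]

lemma isTheta_ncard_lengthenings (hs : IsSkeleton s) (hJ : J ⊆ Finset.range (s.length + 1))
    (hne : J.Nonempty) :
    (fun n ↦ ((lengthenings s b J n).ncard : ℝ)) =Θ[atTop] fun n ↦ (n : ℝ) ^ (J.card - 1) := by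
  refine EventuallyEq.trans_isTheta ((eventually_ge_atTop (word s b).1).mono fun n hn ↦ ?_)
    (isTheta_choose_sub_add (word s b).1 (J.card - 1))
  have hpos := hne.card_pos
  obtain ⟨m, rfl⟩ := Nat.exists_eq_add_of_le hn
  simp only [ncard_lengthenings hs hJ, Nat.add_sub_cancel_left]
  rw [show J.card + m - 1 = m + (J.card - 1) by omega, Nat.choose_symm_add]

lemma isBigO_ncard_lengthenings (hs : IsSkeleton s) (hJ : J ⊆ Finset.range (s.length + 1)) :
    (fun n ↦ ((lengthenings s b J n).ncard : ℝ)) =O[atTop] fun n ↦ (n : ℝ) ^ (J.card - 1) := by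
  obtain rfl | hne := J.eq_empty_or_nonempty
  · refine EventuallyEq.trans_isBigO (f₂ := fun _ ↦ 0)
      ((eventually_gt_atTop (word s b).1).mono fun n hn ↦ ?_) (isBigO_zero _ _)
    obtain ⟨m, rfl⟩ := Nat.exists_eq_add_of_lt hn
    simp [Nat.add_assoc, ncard_lengthenings hs hJ]
  · exact (isTheta_ncard_lengthenings hs hJ hne).1

lemma exists_mem_lengthenings_longRuns (T : ℕ) (s : List PPerm) (c : ℕ → ℕ) :
    ∃ b : Fin (s.length + 1) → Fin (T + 1),
      longRuns T s (fun i ↦ b (Fin.ofNat _ i)) = longRuns T s c ∧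
      word s c ∈ lengthenings s (fun i ↦ b (Fin.ofNat _ i)) (longRuns T s c) (word s c).1 := by
  let b : Fin (s.length + 1) → Fin (T + 1) := fun i ↦ ⟨min (c i) T, by omega⟩
  have hb : ∀ i ≤ s.length, (b (Fin.ofNat _ i) : ℕ) = min (c i) T := fun i hi ↦ by
    simp only [b, Fin.val_ofNat, Nat.mod_eq_of_lt (Nat.lt_succ_of_le hi)]
  refine ⟨b, longRuns_congr fun i hi ↦ by rw [hb i hi]; omega, rfl,
    Finsupp.indicator (longRuns T s c) fun i _ ↦ c i - T, Finsupp.support_indicator_subset _ _,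
    word_congr fun i hi ↦ ?_⟩
  rw [Pi.add_apply, hb i hi]
  by_cases hT : T ≤ c i
  · rw [Finsupp.indicator_of_mem (mem_longRuns.mpr ⟨hi, hT⟩)]
    omega
  · rw [Finsupp.indicator_of_notMem fun h ↦ hT (mem_longRuns.mp h).2]
    omega

end

lemma isBigO_ncard_of_subset_biUnion {ι : Type*} {t : Set ι} (ht : t.Finite)
    {A : ι → ℕ → Set PPerm} {X : ℕ → Set PPerm} {g : ℕ → ℝ} (hX : ∀ n, X n ⊆ ⋃ i ∈ t, A i n)
    (hfin : ∀ i ∈ t, ∀ n, (A i n).Finite)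
    (hA : ∀ i ∈ t, (fun n ↦ ((A i n).ncard : ℝ)) =O[atTop] g) :
    (fun n ↦ ((X n).ncard : ℝ)) =O[atTop] g := by
  refine .trans (.of_norm_le fun n ↦ ?_) (IsBigO.sum fun i hi ↦ hA i (ht.mem_toFinset.mp hi))
  rw [Real.norm_natCast, Finset.sum_apply]
  calc ((X n).ncard : ℝ) ≤ (⋃ i ∈ ht.toFinset, A i n).ncard := by
        simp only [ht.mem_toFinset]
        exact_mod_cast Set.ncard_le_ncard (hX n) (ht.biUnion fun i hi ↦ hfin i hi n)
    _ ≤ ∑ i ∈ ht.toFinset, ((A i n).ncard : ℝ) := by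
        exact_mod_cast Finset.set_ncard_biUnion_le ht.toFinset fun i ↦ A i n

/-- The permutations of size `n` that are words over a skeleton in `S` with at most `e` runs of
length at least `T`. -/
def sparseWords (S : Set (List PPerm)) (T e n : ℕ) : Set PPerm :=
  {τ | τ.1 = n ∧ ∃ s ∈ S, ∃ c, (longRuns T s c).card ≤ e ∧ word s c = τ}

lemma finite_sparseWords (S : Set (List PPerm)) (T e n : ℕ) : (sparseWords S T e n).Finite :=
  (finite_fst_eq n).subset fun _ h ↦ h.1

lemma isBigO_ncard_sparseWords {S : Set (List PPerm)} (hS : S.Finite)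
    (hskel : ∀ s ∈ S, IsSkeleton s) (T e : ℕ) :
    (fun n ↦ ((sparseWords S T e n).ncard : ℝ)) =O[atTop] fun n ↦ (n : ℝ) ^ (e - 1) := by
  let toFun {s : List PPerm} (b : Fin (s.length + 1) → Fin (T + 1)) (i : ℕ) : ℕ :=
    b (Fin.ofNat _ i)
  let A (p : Σ s : List PPerm, Fin (s.length + 1) → Fin (T + 1)) : ℕ → Set PPerm :=
    lengthenings p.1 (toFun p.2) (longRuns T p.1 (toFun p.2))
  have hfin : {p : Σ s : List PPerm, Fin (s.length + 1) → Fin (T + 1) |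
      p.1 ∈ S ∧ (longRuns T p.1 (toFun p.2)).card ≤ e}.Finite :=
    (hS.toFinset.sigma fun _ ↦ Finset.univ).finite_toSet.subset fun p hp ↦ by simpa using hp.1
  refine isBigO_ncard_of_subset_biUnion (A := A) hfin ?_
    (fun p _ n ↦ (finite_fst_eq n).subset fun _ h ↦ h.1) fun p hp ↦ ?_
  · rintro _ _ ⟨rfl, s, hs, c, hc, rfl⟩
    obtain ⟨b, hb, hmem⟩ := exists_mem_lengthenings_longRuns T s c
    rw [← hb] at hc hmem
    exact Set.mem_biUnion (x := ⟨s, b⟩) ⟨hs, hc⟩ hmem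
  · exact (isBigO_ncard_lengthenings (hskel _ hp.1) (Finset.filter_subset _ _)).trans
      (isBigO_natCast_pow_of_le (Nat.sub_le_sub_right hp.2 1))

lemma isBigO_natCast_pow_cnt {C : Set PPerm} {s : List PPerm} {b : ℕ → ℕ} {J : Finset ℕ}
    (hs : IsSkeleton s) (hJ : J ⊆ Finset.range (s.length + 1)) (hne : J.Nonempty)
    (hC : ∀ f : ℕ →₀ ℕ, f.support ⊆ J → word s (b + f) ∈ C) :
    (fun n : ℕ ↦ (n : ℝ) ^ (J.card - 1)) =O[atTop] fun n ↦ (cnt C n : ℝ) := by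
  refine (isTheta_ncard_lengthenings (b := b) hs hJ hne).2.trans (.of_norm_le fun n ↦ ?_)
  rw [Real.norm_natCast, Nat.cast_le]
  refine Set.ncard_le_ncard ?_ ((finite_fst_eq n).subset fun _ h ↦ h.2)
  rintro _ ⟨hsize, f, hf, rfl⟩
  exact ⟨hC f hf, hsize⟩

/-! ### Classes of polynomial growth -/

/-- The permutation `21`. -/
def perm21 : PPerm := ⟨2, Equiv.swap 0 1⟩

lemma isBlock_perm21 : IsBlock perm21 := by
  refine ⟨⟨two_pos, ?_⟩, le_rfl⟩
  rintro ⟨α, β, hα, hβ, h⟩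
  have hsize : 2 = α.1 + β.1 := congrArg Sigma.fst h
  rw [eq_inc_one (by omega : α.1 = 1), eq_inc_one (by omega : β.1 = 1), ← inc_add] at h
  exact absurd (eq_of_heq (Sigma.mk.inj h).2) (by decide : Equiv.swap (0 : Fin 2) 1 ≠ .refl _)

lemma inc_one_patternLE_perm21 : PatternLE (inc 1) perm21 :=
  ⟨fun _ ↦ (0 : Fin 2), Subsingleton.strictMono (α := Fin 1) _, fun i j ↦ by
    rw [Subsingleton.elim (α := Fin 1) i j]
    exact iff_of_false (lt_irrefl _) (lt_irrefl _)⟩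

lemma IsBlock.perm21_patternLE {x : PPerm} (hx : IsBlock x) : PatternLE perm21 x := by
  obtain ⟨i, j, hij, hj, hlt⟩ := hx.exists_inversion
  have hlt' : x.2 ⟨j, hj⟩ < x.2 ⟨i, hij.trans hj⟩ := by
    rwa [Fin.lt_def, ← entry_val, ← entry_val]
  refine ⟨![⟨i, hij.trans hj⟩, ⟨j, hj⟩], ?_, Fin.forall_fin_two.mpr
    ⟨Fin.forall_fin_two.mpr ⟨?_, ?_⟩, Fin.forall_fin_two.mpr ⟨?_, ?_⟩⟩⟩
  · exact Fin.strictMono_iff_lt_succ.mpr fun k ↦ by simpa [Fin.fin_one_eq_zero k] using hij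
  · simp
  · exact iff_of_false (by decide) hlt'.not_gt
  · exact iff_of_true (by decide) hlt'
  · simp

lemma word_patternLE_word_of_fst_le_length {r s : List PPerm} (hr : ∀ x ∈ r, x = perm21)
    (hs : IsSkeleton s) (c b : ℕ → ℕ) (h : (word r c).1 ≤ s.length) :
    PatternLE (word r c) (word s b) := by
  induction s generalizing r c b with
  | nil =>
    rw [eq_inc_zero (Nat.le_zero.mp h)]
    exact inc_zero_patternLE _
  | cons x s ih =>
    obtain ⟨hx, hs⟩ := isSkeleton_cons.mp hs
    suffices PatternLE (word r c) (x ⊕ₚ word s (b ∘ Nat.succ)) from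
      this.trans (patternLE_psum_right _ _)
    rcases hc : c 0 with _ | m
    · rcases r with _ | ⟨y, r⟩
      · rw [word, hc]
        exact inc_zero_patternLE _
      · obtain ⟨rfl, htail⟩ := List.forall_mem_cons.mp hr
        simp only [word, hc, inc_zero_psum, psum_fst, List.length_cons] at h ⊢
        have htwo := isBlock_perm21.2
        exact hx.perm21_patternLE.psum (ih htail hs _ _ (by omega))
    · have hword : word r c = inc 1 ⊕ₚ word r (Function.update c 0 m) := by
        rw [inc_one_psum_word, Function.update_self, Function.update_idem, Nat.add_comm, ← hc,
          Function.update_eq_self]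
      rw [hword, psum_fst, inc_fst, List.length_cons] at h
      rw [hword]
      exact (inc_one_patternLE_perm21.trans hx.perm21_patternLE).psum (ih hr hs _ _ (by omega))

section

variable {C : Set PPerm}

/-- With unboundedly long skeletons, `C` would contain all words over `e + 1` copies of `21`, which
are too many. -/
lemma exists_forall_length_le_of_isBigO_cnt (hclass : IsPermClass C) {e : ℕ}
    (hO : (fun n ↦ (cnt C n : ℝ)) =O[atTop] fun n ↦ (n : ℝ) ^ e) :
    ∃ K, ∀ s ∈ skeletons C, s.length ≤ K := by
  by_contra! h
  have hmem (c : ℕ → ℕ) : word (List.replicate (e + 1) perm21) c ∈ C := by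
    obtain ⟨s, ⟨hs, b, hb⟩, hlen⟩ := h (word (List.replicate (e + 1) perm21) c).1
    exact hclass _ _ (word_patternLE_word_of_fst_le_length (fun _ ↦ List.eq_of_mem_replicate)
      hs c b hlen.le) hb
  have hskel : IsSkeleton (List.replicate (e + 1) perm21) := fun x hx ↦
    List.eq_of_mem_replicate hx ▸ isBlock_perm21
  have hlower := isBigO_natCast_pow_cnt (b := 0) (J := Finset.range (e + 2)) hskel (by simp)
    (by simp) fun f _ ↦ hmem _
  rw [Finset.card_range] at hlower
  exact isLittleO_irrefl ((eventually_gt_atTop 0).mono fun n hn ↦ by positivity).frequently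
    ((isLittleO_natCast_pow_of_lt e.lt_succ_self).trans_isBigO (hlower.trans hO))

lemma finite_skeletons (hclass : IsPermClass C) (hfin : {π : PPerm | π ∈ C ∧ SumIndec π}.Finite)
    {K : ℕ} (hK : ∀ s ∈ skeletons C, s.length ≤ K) : (skeletons C).Finite := by
  have : Finite {π : PPerm | π ∈ C ∧ SumIndec π} := hfin
  refine ((List.finite_length_le {π : PPerm | π ∈ C ∧ SumIndec π} K).image
    (List.map Subtype.val)).subset fun s hs ↦ ?_
  have hmem : ∀ x ∈ s, x ∈ C ∧ SumIndec x := fun x hx ↦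
    ⟨hclass _ _ (patternLE_word_of_mem hx _) hs.2.choose_spec, (hs.1 x hx).1⟩
  lift s to List {π : PPerm | π ∈ C ∧ SumIndec π} using hmem
  exact ⟨s, (List.length_map _).symm.trans_le (hK _ hs), rfl⟩

variable {N d Q : ℕ}

lemma RunControl.isBigO_natCast_pow_cnt (hC : RunControl C N d Q) (hd : 0 < d) :
    (fun n : ℕ ↦ (n : ℝ) ^ (d - 1)) =O[atTop] fun n ↦ (cnt C n : ℝ) := by
  obtain ⟨s, c, hs, hc, rfl⟩ := hC.exists_card_longRuns_eq
  refine PPerm.isBigO_natCast_pow_cnt (b := c) hs (Finset.filter_subset _ _)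
    (Finset.card_pos.mp hd) fun f hf ↦ (hC.mem_iff hs fun i _ ↦ ?_).mp hc
  by_cases hi : i ∈ longRuns N s c
  · have := (mem_longRuns.mp hi).2
    rw [Pi.add_apply]
    omega
  · rw [Pi.add_apply, Finsupp.notMem_support_iff.mp fun h ↦ hi (hf h), Nat.add_zero]

lemma RunControl.cnt_le (hC : RunControl C N d Q) (n : ℕ) :
    cnt C n ≤ (sparseWords (skeletons C) N d n).ncard := by
  refine Set.ncard_le_ncard ?_ (finite_sparseWords ..)
  rintro τ ⟨hτ, hsize⟩
  obtain ⟨s, c, hs, rfl⟩ := exists_eq_word τ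
  exact ⟨hsize, s, ⟨hs, c, hτ⟩, c, hC.card_longRuns_le hs hτ, rfl⟩

lemma RunControl.wilfcnt_le (hC : RunControl C N d Q) (hd : 2 ≤ d) (n : ℕ) :
    wilfcnt C n ≤ (sparseWords (skeletons C) (Q + 2) (d - 1) n).ncard := by
  have hfin := finite_sparseWords (skeletons C) (Q + 2) (d - 1) n
  refine (Set.ncard_le_ncard (t := (fun α ↦ {β | β ∈ C ∧ β.1 = n ∧ WilfEq C α β}) '' _) ?_
    (hfin.image _)).trans (Set.ncard_image_le hfin)
  rintro _ ⟨α, hα, hn, rfl⟩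
  obtain ⟨s, a, hs, rfl⟩ := exists_eq_word α
  obtain ⟨b, hsize, hwilf, hcard⟩ := hC.exists_wilfEq_card_longRuns_lt hd hs hα
  refine ⟨word s b, ⟨hsize.trans hn, s, ⟨hs, a, hα⟩, b, Nat.le_sub_one_of_lt hcard, rfl⟩, ?_⟩
  ext β
  exact and_congr_right' (and_congr_right' (forall_congr' fun m ↦ by rw [hwilf m]))

lemma RunControl.two_le_of_not_bounded (hC : RunControl C N d Q) (hfin : (skeletons C).Finite)
    (hunb : ¬ ∃ M : ℕ, ∀ n : ℕ, cnt C n ≤ M) : 2 ≤ d := by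
  by_contra! hd
  have hO := isBigO_ncard_sparseWords hfin (fun _ hs ↦ hs.1) N d
  rw [show d - 1 = 0 by omega] at hO
  simp only [pow_zero] at hO
  obtain ⟨M, hM⟩ := (isBigO_one_nat_atTop_iff (f := fun n ↦ (_ : ℝ))).mp hO
  refine hunb ⟨⌊M⌋₊, fun n ↦ (hC.cnt_le n).trans (Nat.le_floor ?_)⟩
  simpa using hM n

end

end PPerm

open PPerm in
theorem unboundedPolynomialClass_wilfCollapse_general (C : Set PPerm)
    (hclass : IsPermClass C) (hfin : {π : PPerm | π ∈ C ∧ SumIndec π}.Finite) (e : ℕ)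
    (hO : (fun n => (cnt C n : ℝ)) =O[atTop] fun n => (n : ℝ) ^ e)
    (hunb : ¬ ∃ M : ℕ, ∀ n : ℕ, cnt C n ≤ M) :
    WilfCollapse C := by
  obtain ⟨K, hK⟩ := exists_forall_length_le_of_isBigO_cnt hclass hO
  have hskel := finite_skeletons hclass hfin hK
  have hne : C.Nonempty := Set.nonempty_iff_ne_empty.mpr fun h ↦ hunb ⟨0, fun n ↦ by simp [cnt, h]⟩
  obtain ⟨N, d, Q, hC⟩ := exists_runControl hclass hne hskel
  have hd := hC.two_le_of_not_bounded hskel hunb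
  calc (fun n ↦ (wilfcnt C n : ℝ))
      =O[atTop] fun n ↦ ((sparseWords (skeletons C) (Q + 2) (d - 1) n).ncard : ℝ) :=
        .of_norm_le fun n ↦ by simpa using hC.wilfcnt_le hd n
    _ =O[atTop] fun n ↦ (n : ℝ) ^ (d - 1 - 1) := isBigO_ncard_sparseWords hskel (fun _ hs ↦ hs.1) ..
    _ =o[atTop] fun n ↦ (n : ℝ) ^ (d - 1) := isLittleO_natCast_pow_of_lt (by omega)
    _ =O[atTop] fun n ↦ (cnt C n : ℝ) := hC.isBigO_natCast_pow_cnt (by omega)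

/-- **Proposition `pro-poly`.**  Any *unbounded polynomial class* — a permutation class
with finitely many sum-indecomposable permutations whose dominant growth rate `γ`
equals `1` (equivalently, `c_n = Θ(n^{D−1})` for some positive integer `D`) and whose
growth function is unbounded — exhibits a Wilf collapse. -/
theorem unboundedPolynomialClass_wilfCollapse (C : Set PPerm)
    (hclass : IsPermClass C)
    (hfin : {π : PPerm | π ∈ C ∧ SumIndec π}.Finite)
    (D : ℕ) (hD : 0 < D)
    (hΘ : (fun n => (cnt C n : ℝ)) =Θ[atTop] fun n => (n : ℝ) ^ (D - 1))
    (hunb : ¬ ∃ M : ℕ, ∀ n : ℕ, cnt C n ≤ M) :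
    WilfCollapse C :=
  unboundedPolynomialClass_wilfCollapse_general C hclass hfin (D - 1) hΘ.1 hunb
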